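/- arXiv:1912.01994 — 6 statements merged into one kernel-verified Lean document; each statement's English description precedes it below -/
import Mathlib

section
/- Let h : ℕ_τ → ℕ_τ be a homeomorphism of the Golomb space and p a prime number. For every a ∈ ℕ with a ≠ 1 and p ∤ a, the image under h of the closure of a^ℕ in the p-adic topology on ℕ \ pℕ equals the closure of h(a)^ℕ in the h(p)-adic topology on ℕ \ h(p)ℕ. Consequently the map X ↦ h(X) is an order isomorphism of the poset 𝒳_p onto the poset 𝒳_{h(p)}. -/
/-!
Write `clNhds x` for the filter generated by the closures of the Golomb neighbourhoods of `x`, and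
`tri x y z` for the infimum of three such filters. A homeomorphism `h` carries `tri x y z` to
`tri (h x) (h y) (h z)`, and these filters encode the arithmetic that is needed.

* For distinct points, `tri x y z` is the filter generated by the sets of multiples of the primes
  exactly when `x, y, z` are pairwise coprime, and that filter dominates (as a family of sets) all
  others. Hence `h` preserves coprimality and fixes `1`, and every prime `q` has a companion prime
  `q'` with `q ∣ x ↔ q' ∣ h x` (`Assoc`); so `h` maps the prime powers of `q` onto those of `q'`.
* If `u ≠ v` are powers of `q` and `q ∤ x`, then `tri x u v` records the `q`-adic neighbourhoods of
  `x`, up to multiples of `q` and divisibility by other primes. This yields a topological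
  description of the `q`-adic closure (`mem_adicCl_iff`), and so `h` carries `q`-adic closures to
  `q'`-adic closures.
* For `a > 1` the closure of the powers of `a` is an open subgroup of the `q`-adic units, hence
  unchanged when `a` is replaced by a number close to it (`exists_clPow_eq`). By Dirichlet's theorem
  primes are dense, so the known behaviour of `h` on prime-power classes determines the image of the
  closure of the powers of any `x`: it is the `q'`-adic closure of the powers of `h x`
  (`Assoc.image_clPow`).
* Finally `h p` is a prime and not just a prime power `p' ^ k`: for `k ≥ 2` the closures of the
  powers of `p'` and of `p' ^ k` would agree for all primes `q' ≠ p'`, which fails for a prime whose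
  power divides `p' ^ k - 1` but not `p' - 1` (`assoc_apply`).
-/

open TopologicalSpace

/-- The arithmetic progression `a + bℕ₀ = {a + b*n : n ≥ 0}` inside the positive integers. -/
def golombBasic (a b : ℕ) : Set ℕ+ := {x : ℕ+ | ∃ n : ℕ, (x : ℕ) = a + b * n}

/-- The Golomb topology on the positive integers, generated by the arithmetic
progressions `a + bℕ₀` with coprime `a, b ∈ ℕ`. -/
instance golombTopology : TopologicalSpace ℕ+ :=
  generateFrom {S : Set ℕ+ | ∃ a b : ℕ, 0 < a ∧ 0 < b ∧ Nat.Coprime a b ∧ S = golombBasic a b}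

/-- The positive integers not divisible by `p` (the set `ℕ \ pℕ`). -/
abbrev Np (p : ℕ) : Type := {x : ℕ+ // ¬ p ∣ (x : ℕ)}

/-- The `p`-adic topology on `ℕ \ pℕ`, generated by the traces of the sets
`x + p^nℕ₀`, `x, n ∈ ℕ`. -/
def padicTop (p : ℕ) : TopologicalSpace (Np p) :=
  generateFrom {S : Set (Np p) | ∃ x n : ℕ, 0 < x ∧ 0 < n ∧
    S = {y : Np p | ∃ k : ℕ, ((y : ℕ+) : ℕ) = x + p ^ n * k}}

/-- Closure of a set of positive integers in the `p`-adic topology on `ℕ \ pℕ`,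
viewed again as a set of positive integers. -/
def padicClosure (p : ℕ) (A : Set ℕ+) : Set ℕ+ :=
  Subtype.val '' (@closure (Np p) (padicTop p) (Subtype.val ⁻¹' A))

/-- `a^ℕ = {a^k : k ∈ ℕ}`, the set of positive powers of `a`. -/
def powSet (a : ℕ) : Set ℕ+ := {y : ℕ+ | ∃ k : ℕ, 0 < k ∧ (y : ℕ) = a ^ k}

/-- The closure of `a^ℕ` in the `p`-adic topology on `ℕ \ pℕ`. -/
def clPow (p a : ℕ) : Set ℕ+ := padicClosure p (powSet a)

/-- The family `𝒳_p` of closures of the sets `a^ℕ` for `a ∈ ℕ \ pℕ`, `a ≠ 1`. -/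
def XX (p : ℕ) : Set (Set ℕ+) := {X | ∃ a : ℕ, 0 < a ∧ a ≠ 1 ∧ ¬ p ∣ a ∧ X = clPow p a}

/-- The projection `π_n(X)` of a set of positive integers to `ℤ/p^nℤ`. -/
def pin (p n : ℕ) (X : Set ℕ+) : Set (ZMod (p ^ n)) :=
  (fun y : ℕ+ => ((y : ℕ) : ZMod (p ^ n))) '' X

/-- `n(X)`: the least `n ∈ ℕ` with `X = ℕ ∩ π_n⁻¹(π_n(X))` and `|π_n(X)| ≥ max(p,3)`. -/
noncomputable def nX (p : ℕ) (X : Set ℕ+) : ℕ :=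
  sInf {n : ℕ | 0 < n ∧ X = {y : ℕ+ | ((y : ℕ) : ZMod (p ^ n)) ∈ pin p n X} ∧
    max p 3 ≤ (pin p n X).ncard}

/-- `i(X)`: the index of the subgroup `π_{n(X)}(X)` in the group of units of `ℤ/p^{n(X)}ℤ`. -/
noncomputable def iX (p : ℕ) (X : Set ℕ+) : ℕ :=
  Nat.card ((ZMod (p ^ nX p X))ˣ) / (pin p (nX p X) X).ncard


namespace GolombRigid

open Filter Topology

/-! ### Neighbourhoods and closures in the Golomb topology -/

theorem exists_golombBasic_subset_of_mem_nhds {x : ℕ+} {U : Set ℕ+} (hU : U ∈ 𝓝 x) :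
    ∃ b : ℕ, 0 < b ∧ Nat.Coprime x b ∧ golombBasic x b ⊆ U := by
  obtain ⟨t, htU, ht, hxt⟩ := mem_nhds_iff.1 hU
  suffices H : ∀ x ∈ t, ∃ b : ℕ, 0 < b ∧ Nat.Coprime (x : ℕ) b ∧ golombBasic x b ⊆ t by
    obtain ⟨b, hb, hc, hs⟩ := H x hxt
    exact ⟨b, hb, hc, hs.trans htU⟩
  clear hxt htU hU
  induction ht with
  | basic s hs =>
    obtain ⟨a, b, ha, hb, hab, rfl⟩ := hs
    rintro x ⟨n, hn⟩
    refine ⟨b, hb, ?_, ?_⟩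
    · rw [hn]
      simpa using hab
    · rintro y ⟨m, hm⟩
      exact ⟨n + m, by rw [hm, hn]; ring⟩
  | univ => exact fun x _ => ⟨1, one_pos, by simp, Set.subset_univ _⟩
  | inter s t _ _ hs ht =>
    rintro x ⟨hxs, hxt⟩
    obtain ⟨b, hb, hxb, hbs⟩ := hs x hxs
    obtain ⟨c, hc, hxc, hct⟩ := ht x hxt
    refine ⟨b * c, Nat.mul_pos hb hc, hxb.mul_right hxc, ?_⟩
    rintro y ⟨m, hm⟩
    exact ⟨hbs ⟨c * m, by rw [hm]; ring⟩, hct ⟨b * m, by rw [hm]; ring⟩⟩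
  | sUnion S _ hS =>
    rintro x ⟨s, hs, hxs⟩
    obtain ⟨b, hb, hxb, hbs⟩ := hS s hs x hxs
    exact ⟨b, hb, hxb, hbs.trans (Set.subset_sUnion_of_mem hs)⟩

theorem golombBasic_mem_nhds (x : ℕ+) {b : ℕ} (hb : 0 < b) (hxb : Nat.Coprime x b) :
    golombBasic x b ∈ 𝓝 x :=
  IsOpen.mem_nhds (TopologicalSpace.isOpen_generateFrom_of_mem ⟨x, b, x.pos, hb, hxb, rfl⟩)
    ⟨0, by simp⟩

/-- A common element of the two progressions `x + bℕ₀` and `y + cℕ₀` exists as soon as the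
residues agree modulo `gcd b c`. -/
theorem exists_mem_golombBasic_inter {x y : ℕ+} {b c : ℕ} (hb : 0 < b) (hc : 0 < c)
    (h : (y : ℕ) ≡ x [MOD Nat.gcd c b]) : (golombBasic y c ∩ golombBasic x b).Nonempty := by
  obtain ⟨k, hk1, hk2⟩ := Nat.chineseRemainder' h
  -- Shift the solution by a multiple of `b * c` so that it lies beyond both starting points.
  set K : ℕ := k + b * c * (x + y) with hK
  have hbc : 1 ≤ b * c := Nat.mul_pos hb hc
  have hge : (x : ℕ) + y ≤ K := by nlinarith [Nat.zero_le k, x.pos, y.pos]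
  have hKy : K ≡ y [MOD c] := by
    refine Nat.ModEq.trans ?_ hk1
    rw [Nat.ModEq, hK, show b * c * ((x : ℕ) + y) = c * (b * (x + y)) by ring,
      Nat.add_mul_mod_self_left]
  have hKx : K ≡ x [MOD b] := by
    refine Nat.ModEq.trans ?_ hk2
    rw [Nat.ModEq, hK, show b * c * ((x : ℕ) + y) = b * (c * (x + y)) by ring,
      Nat.add_mul_mod_self_left]
  have hx := x.pos
  obtain ⟨m, hm⟩ := (Nat.modEq_iff_dvd' (by omega)).1 hKy.symm
  obtain ⟨n, hn⟩ := (Nat.modEq_iff_dvd' (by omega)).1 hKx.symm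
  refine ⟨⟨K, by omega⟩, ⟨m, ?_⟩, ⟨n, ?_⟩⟩
  · simp only [PNat.mk_coe]; omega
  · simp only [PNat.mk_coe]; omega

theorem mem_closure_golombBasic {x w : ℕ+} {b : ℕ} (hb : 0 < b)
    (h : ∀ c : ℕ, Nat.Coprime w c → (w : ℕ) ≡ x [MOD Nat.gcd c b]) :
    w ∈ closure (golombBasic x b) := by
  rw [mem_closure_iff_nhds]
  intro t ht
  obtain ⟨c, hc, hwc, hct⟩ := exists_golombBasic_subset_of_mem_nhds ht
  exact (exists_mem_golombBasic_inter hb hc (h c hwc)).mono (Set.inter_subset_inter_left _ hct)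

theorem modEq_of_mem_closure {x w : ℕ+} {p k : ℕ} (hp : p.Prime) (hw : ¬ p ∣ (w : ℕ))
    (h : w ∈ closure (golombBasic x (p ^ k))) : (w : ℕ) ≡ x [MOD p ^ k] := by
  rw [mem_closure_iff_nhds] at h
  obtain ⟨y, ⟨m, hm⟩, ⟨n, hn⟩⟩ := h _ (golombBasic_mem_nhds w (pow_pos hp.pos k)
    (((Nat.Prime.coprime_iff_not_dvd hp).2 hw).symm.pow_right k))
  have : (w : ℕ) + p ^ k * m ≡ x + p ^ k * n [MOD p ^ k] := by rw [← hm, hn]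
  simpa [Nat.ModEq] using this

/-! ### The filters of closed neighbourhoods -/

/-- The filter generated by the closures of the neighbourhoods of `x`. -/
def clNhds (x : ℕ+) : Filter ℕ+ := (𝓝 x).lift' closure

theorem mem_clNhds {x : ℕ+} {S : Set ℕ+} : S ∈ clNhds x ↔ ∃ U ∈ 𝓝 x, closure U ⊆ S :=
  Filter.mem_lift'_sets (monotone_closure ℕ+)

theorem map_clNhds (h : ℕ+ ≃ₜ ℕ+) (x : ℕ+) : map h (clNhds x) = clNhds (h x) := by
  ext S
  rw [Filter.mem_map, mem_clNhds, mem_clNhds]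
  constructor
  · rintro ⟨U, hU, hS⟩
    refine ⟨h '' U, h.isOpenMap.image_mem_nhds hU, ?_⟩
    rw [← h.image_closure]
    exact Set.image_subset_iff.2 hS
  · rintro ⟨U, hU, hS⟩
    refine ⟨h ⁻¹' U, h.continuous.continuousAt.preimage_mem_nhds hU, ?_⟩
    rw [← h.preimage_closure]
    exact Set.preimage_mono hS

/-- The numbers divisible by all prime divisors of `Q`. -/
def radMul (Q : ℕ) : Set ℕ+ := {w | ∀ r : ℕ, r.Prime → r ∣ Q → r ∣ (w : ℕ)}

theorem radMul_anti {Q R : ℕ} (h : Q ∣ R) : radMul R ⊆ radMul Q :=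
  fun _ hw r hr hrQ => hw r hr (hrQ.trans h)

theorem coprime_of_mem_radMul {Q c : ℕ} {w : ℕ+} (hw : w ∈ radMul Q) (hc : Nat.Coprime w c) :
    Nat.Coprime c Q :=
  Nat.coprime_of_dvd fun r hr hrc hrQ =>
    hr.one_lt.ne' (Nat.eq_one_of_dvd_coprimes hc (hw r hr hrQ) hrc)

theorem mem_clNhds_of_not_dvd {p : ℕ} (hp : p.Prime) {x : ℕ+} (hx : ¬ p ∣ (x : ℕ)) (k : ℕ) :
    {w : ℕ+ | p ∣ (w : ℕ) ∨ (w : ℕ) ≡ x [MOD p ^ k]} ∈ clNhds x := by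
  refine mem_clNhds.2 ⟨_, golombBasic_mem_nhds x (pow_pos hp.pos k)
    (((Nat.Prime.coprime_iff_not_dvd hp).2 hx).symm.pow_right k), fun w hw => ?_⟩
  by_cases hpw : p ∣ (w : ℕ)
  · exact Or.inl hpw
  · exact Or.inr (modEq_of_mem_closure hp hpw hw)

/-- For `S ∈ clNhds x` there is a modulus `b` coprime to `x` such that, however `b` is covered by
a product `B * C`, the set `S` contains all numbers divisible by the primes of `B` and congruent to
`x` modulo `C`. -/
theorem exists_modulus_of_mem_clNhds {x : ℕ+} {S : Set ℕ+} (hS : S ∈ clNhds x) :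
    ∃ b : ℕ, 0 < b ∧ Nat.Coprime x b ∧ ∀ (B C : ℕ) (w : ℕ+), b ∣ B * C → w ∈ radMul B →
      (w : ℕ) ≡ x [MOD C] → w ∈ S := by
  obtain ⟨U, hU, hUS⟩ := mem_clNhds.1 hS
  obtain ⟨b, hb, hxb, hbU⟩ := exists_golombBasic_subset_of_mem_nhds hU
  refine ⟨b, hb, hxb, fun B C w hbBC hwB hwC => hUS (closure_mono hbU ?_)⟩
  refine mem_closure_golombBasic hb fun c hc => hwC.of_dvd ?_
  have h1 : Nat.Coprime c B := coprime_of_mem_radMul hwB hc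
  exact (Nat.Coprime.coprime_dvd_left (Nat.gcd_dvd_left c b) h1).dvd_of_dvd_mul_left
    ((Nat.gcd_dvd_right c b).trans hbBC)

theorem multiples_mem_inf {p : ℕ} (hp : p.Prime) {x y : ℕ+} (hxy : x ≠ y)
    (hx : ¬ p ∣ (x : ℕ)) (hy : ¬ p ∣ (y : ℕ)) :
    {w : ℕ+ | p ∣ (w : ℕ)} ∈ clNhds x ⊓ clNhds y := by
  -- The exponent is large enough to separate `x` and `y` modulo `p ^ k`.
  set k : ℕ := x + y
  have hk : (x : ℕ) + y < p ^ k := Nat.lt_pow_self hp.one_lt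
  filter_upwards [mem_inf_of_left (mem_clNhds_of_not_dvd hp hx k),
    mem_inf_of_right (mem_clNhds_of_not_dvd hp hy k)] with w h1 h2
  rcases h1 with h1 | h1
  · exact h1
  rcases h2 with h2 | h2
  · exact h2
  exact absurd (PNat.coe_inj.1
    (Nat.ModEq.eq_of_lt_of_lt (h1.symm.trans h2) (by omega) (by omega))) hxy

theorem radMul_mem_of_primes {F : Filter ℕ+} {Q : ℕ} (hQ : 0 < Q)
    (h : ∀ r : ℕ, r.Prime → r ∣ Q → {w : ℕ+ | r ∣ (w : ℕ)} ∈ F) : radMul Q ∈ F := by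
  have : (⋂ r ∈ Q.primeFactors, {w : ℕ+ | r ∣ (w : ℕ)}) ∈ F :=
    (Filter.biInter_finset_mem _).2 fun r hr =>
      h r (Nat.prime_of_mem_primeFactors hr) (Nat.dvd_of_mem_primeFactors hr)
  refine mem_of_superset this fun w hw r hr hrQ => ?_
  simp only [Set.mem_iInter] at hw
  exact hw r (hr.mem_primeFactors hrQ hQ.ne')

/-! ### Homeomorphisms preserve coprimality -/

/-- The filter generated by the intersections of the closures of neighbourhoods of three points. -/
def tri (x y z : ℕ+) : Filter ℕ+ := clNhds x ⊓ (clNhds y ⊓ clNhds z)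

theorem map_tri (h : ℕ+ ≃ₜ ℕ+) (x y z : ℕ+) : map h (tri x y z) = tri (h x) (h y) (h z) := by
  simp only [tri, Filter.map_inf h.injective, map_clNhds]

/-- As a family of sets, every `tri x y z` is contained in the filter generated by the sets
`radMul Q`; by `radMul_mem_tri` the two agree for distinct, pairwise coprime points. -/
theorem radMul_subset_of_mem_tri {x y z : ℕ+} {S : Set ℕ+} (hS : S ∈ tri x y z) :
    ∃ Q : ℕ, 0 < Q ∧ radMul Q ⊆ S := by
  obtain ⟨S₁, h₁, S', h', rfl⟩ := Filter.mem_inf_iff.1 hS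
  obtain ⟨S₂, h₂, S₃, h₃, rfl⟩ := Filter.mem_inf_iff.1 h'
  obtain ⟨b₁, hb₁, -, H₁⟩ := exists_modulus_of_mem_clNhds h₁
  obtain ⟨b₂, hb₂, -, H₂⟩ := exists_modulus_of_mem_clNhds h₂
  obtain ⟨b₃, hb₃, -, H₃⟩ := exists_modulus_of_mem_clNhds h₃
  refine ⟨b₁ * (b₂ * b₃), by positivity, fun w hw => ⟨?_, ?_, ?_⟩⟩
  · exact H₁ _ 1 w (Dvd.intro _ (mul_one _).symm) hw (Nat.modEq_one)
  · exact H₂ _ 1 w ⟨b₁ * b₃, by ring⟩ hw (Nat.modEq_one)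
  · exact H₃ _ 1 w ⟨b₁ * b₂, by ring⟩ hw (Nat.modEq_one)

theorem radMul_mem_tri {x y z : ℕ+} (hxy : x ≠ y) (hxz : x ≠ z) (hyz : y ≠ z)
    (cxy : Nat.Coprime x y) (cxz : Nat.Coprime x z) (cyz : Nat.Coprime y z) {Q : ℕ} (hQ : 0 < Q) :
    radMul Q ∈ tri x y z := by
  refine radMul_mem_of_primes hQ fun r hr _ => ?_
  have key : ∀ {a b : ℕ+}, Nat.Coprime a b → r ∣ (a : ℕ) → ¬ r ∣ (b : ℕ) := fun hab ha hb =>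
    hr.one_lt.ne' (Nat.eq_one_of_dvd_coprimes hab ha hb)
  by_cases hx : r ∣ (x : ℕ)
  · exact mem_inf_of_right (multiples_mem_inf hr hyz (key cxy hx) (key cxz hx))
  by_cases hy : r ∣ (y : ℕ)
  · have := multiples_mem_inf hr hxz hx (key cyz hy)
    exact Filter.le_def.1 (inf_le_inf_left _ inf_le_right) _ this
  · have := multiples_mem_inf hr hxy hx hy
    exact Filter.le_def.1 (inf_le_inf_left _ inf_le_left) _ this

/-- If `p` divides two of the three points, the multiples of `p` do not belong to the filter of the
triple. -/
theorem multiples_not_mem_tri {p : ℕ} (hp : p.Prime) {x y z : ℕ+}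
    (hx : p ∣ (x : ℕ)) (hy : p ∣ (y : ℕ)) : {w : ℕ+ | p ∣ (w : ℕ)} ∉ tri x y z := by
  intro hS
  obtain ⟨S₁, h₁, S', h', hSS'⟩ := Filter.mem_inf_iff.1 hS
  obtain ⟨S₂, h₂, S₃, h₃, rfl⟩ := Filter.mem_inf_iff.1 h'
  obtain ⟨b₁, hb₁, c₁, H₁⟩ := exists_modulus_of_mem_clNhds h₁
  obtain ⟨b₂, hb₂, c₂, H₂⟩ := exists_modulus_of_mem_clNhds h₂
  obtain ⟨b₃, hb₃, c₃, H₃⟩ := exists_modulus_of_mem_clNhds h₃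
  have hpb₁ : ¬ p ∣ b₁ := fun hd => hp.one_lt.ne' (Nat.eq_one_of_dvd_coprimes c₁ hx hd)
  have hpb₂ : ¬ p ∣ b₂ := fun hd => hp.one_lt.ne' (Nat.eq_one_of_dvd_coprimes c₂ hy hd)
  obtain ⟨k, B, hpB, hb₃B⟩ := Nat.exists_eq_pow_mul_and_not_dvd hb₃.ne' p hp.one_lt.ne'
  have hB0 : 0 < B := Nat.pos_of_ne_zero (by rintro rfl; simp at hpB)
  have hpQ : ¬ p ∣ b₁ * (b₂ * B) := by
    rw [hp.dvd_mul, hp.dvd_mul]; tauto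
  have hQ0 : 0 < b₁ * (b₂ * B) := by positivity
  -- A point outside `pℕ` that lies in all three closures.
  suffices H : ∃ w : ℕ+, b₁ * (b₂ * B) ∣ (w : ℕ) ∧ (w : ℕ) ≡ z [MOD p ^ k] ∧ ¬ p ∣ (w : ℕ) by
    obtain ⟨w, hw, hwz, hpw⟩ := H
    have hwQ : w ∈ radMul (b₁ * (b₂ * B)) := fun r _ hr => hr.trans hw
    apply hpw
    have : w ∈ {w : ℕ+ | p ∣ (w : ℕ)} := by
      rw [hSS']
      refine ⟨?_, ?_, ?_⟩
      · exact H₁ _ 1 w (Dvd.intro _ (mul_one _).symm) hwQ (Nat.modEq_one)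
      · exact H₂ _ 1 w ⟨b₁ * B, by ring⟩ hwQ (Nat.modEq_one)
      · exact H₃ _ (p ^ k) w ⟨b₁ * b₂, by rw [hb₃B]; ring⟩ hwQ hwz
    exact this
  by_cases hz : p ∣ (z : ℕ)
  · have hk : k = 0 := by
      by_contra hk
      refine hp.one_lt.ne' (Nat.eq_one_of_dvd_coprimes c₃ hz ?_)
      rw [hb₃B]
      exact Dvd.dvd.mul_right (dvd_pow_self p hk) _
    subst hk
    exact ⟨⟨b₁ * (b₂ * B), hQ0⟩, dvd_rfl, by simpa using Nat.modEq_one, hpQ⟩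
  · have hcop : Nat.Coprime (b₁ * (b₂ * B)) (p ^ (k + 1)) :=
      ((Nat.Prime.coprime_iff_not_dvd hp).2 hpQ).symm.pow_right _
    obtain ⟨w, hw1, hw2⟩ := Nat.chineseRemainder hcop 0 z
    have hpw : ¬ p ∣ w := fun hd => hz ((hw2.of_dvd (dvd_pow_self p k.succ_ne_zero)).dvd_iff
      dvd_rfl |>.1 hd)
    have hw0 : 0 < w := Nat.pos_of_ne_zero (by rintro rfl; simp at hpw)
    exact ⟨⟨w, hw0⟩, (Nat.modEq_zero_iff_dvd).1 hw1, hw2.of_dvd (pow_dvd_pow p k.le_succ), hpw⟩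

theorem exists_third (x y : ℕ+) :
    ∃ z : ℕ+, x ≠ z ∧ y ≠ z ∧ Nat.Coprime x z ∧ Nat.Coprime y z := by
  refine ⟨x * y + 1, ?_, ?_, ?_, ?_⟩
  · intro h
    have := congrArg PNat.val h
    have hx := x.pos
    have hy := y.pos
    simp only [PNat.val_ofNat, PNat.add_coe, PNat.mul_coe] at this
    nlinarith
  · intro h
    have := congrArg PNat.val h
    have hx := x.pos
    have hy := y.pos
    simp only [PNat.val_ofNat, PNat.add_coe, PNat.mul_coe] at this
    nlinarith
  · simp
  · simp

/-- The filter generated by the sets `radMul Q` is invariant under homeomorphisms, being the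
greatest among the families of sets `tri x y z`. -/
theorem exists_radMul_subset_preimage (h : ℕ+ ≃ₜ ℕ+) {Q : ℕ} (hQ : 0 < Q) :
    ∃ R : ℕ, 0 < R ∧ radMul R ⊆ h ⁻¹' radMul Q := by
  have h1 : radMul Q ∈ tri 1 2 3 := radMul_mem_tri (by decide) (by decide) (by decide)
    (by decide) (by decide) (by decide) hQ
  rw [← h.apply_symm_apply 1, ← h.apply_symm_apply 2, ← h.apply_symm_apply 3, ← map_tri] at h1
  exact radMul_subset_of_mem_tri (Filter.mem_map.1 h1)

theorem coprime_map_of_ne (h : ℕ+ ≃ₜ ℕ+) {x y : ℕ+} (hxy : x ≠ y) (c : Nat.Coprime x y) :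
    Nat.Coprime (h x) (h y) := by
  obtain ⟨z, hxz, hyz, cxz, cyz⟩ := exists_third x y
  by_contra hn
  obtain ⟨p, hp, hpx, hpy⟩ := Nat.Prime.not_coprime_iff_dvd.1 hn
  refine multiples_not_mem_tri hp hpx hpy (z := h z) ?_
  obtain ⟨R, hR, hRS⟩ := exists_radMul_subset_preimage h hp.pos
  rw [← map_tri, Filter.mem_map]
  exact mem_of_superset (radMul_mem_tri hxy hxz hyz c cxz cyz hR)
    (hRS.trans fun w hw => hw p hp dvd_rfl)

theorem map_one (h : ℕ+ ≃ₜ ℕ+) : h 1 = 1 := by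
  by_contra h1
  have hne : h 1 ≠ h 1 * h 1 := by
    intro he
    exact h1 (by simpa using he)
  have := coprime_map_of_ne h (x := 1) (y := h.symm (h 1 * h 1))
    (fun he => hne (h.symm_apply_eq.1 he.symm).symm) (by simp)
  rw [h.apply_symm_apply, PNat.mul_coe, Nat.coprime_mul_iff_right, Nat.coprime_self] at this
  exact h1 (PNat.coe_eq_one_iff.1 this.1)

theorem coprime_map (h : ℕ+ ≃ₜ ℕ+) {x y : ℕ+} (c : Nat.Coprime x y) :
    Nat.Coprime (h x) (h y) := by
  by_cases hxy : x = y
  · subst hxy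
    rw [Nat.coprime_self, PNat.coe_eq_one_iff] at c
    rw [c, map_one]
    simp
  · exact coprime_map_of_ne h hxy c

theorem coprime_map_iff (h : ℕ+ ≃ₜ ℕ+) {x y : ℕ+} :
    Nat.Coprime (h x) (h y) ↔ Nat.Coprime x y :=
  ⟨fun c => by simpa using coprime_map h.symm c, coprime_map h⟩

/-! ### The prime corresponding to a prime -/

/-- The primes `q` and `q'` correspond to each other under `h`: divisibility by `q` is carried to
divisibility by `q'`. -/
structure Assoc (h : ℕ+ ≃ₜ ℕ+) (q q' : ℕ) : Prop where
  prime : q.Prime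
  prime' : q'.Prime
  dvd_iff : ∀ x : ℕ+, q ∣ (x : ℕ) ↔ q' ∣ (h x : ℕ)

theorem Assoc.symm {h : ℕ+ ≃ₜ ℕ+} {q q' : ℕ} (H : Assoc h q q') : Assoc h.symm q' q :=
  ⟨H.prime', H.prime, fun x => by simpa using (H.dvd_iff (h.symm x)).symm⟩

theorem exists_assoc (h : ℕ+ ≃ₜ ℕ+) {q : ℕ} (hq : q.Prime) : ∃ q', Assoc h q q' := by
  set Q : ℕ+ := ⟨q, hq.pos⟩ with hQ
  have hQ1 : (h Q : ℕ) ≠ 1 := by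
    rw [Ne, PNat.coe_eq_one_iff, ← map_one h, h.injective.eq_iff]
    intro hh
    exact hq.one_lt.ne' (congrArg PNat.val hh)
  obtain ⟨q', hq', hd⟩ := Nat.exists_prime_and_dvd hQ1
  set R : ℕ+ := ⟨q', hq'.pos⟩ with hR
  have hcop : ∀ {r : ℕ}, r.Prime → ∀ x : ℕ+, r ∣ (x : ℕ) ↔ ¬ Nat.Coprime r x := fun hr x => by
    rw [hr.coprime_iff_not_dvd, not_not]
  have hqR : q ∣ (h.symm R : ℕ) := by
    rw [hcop hq, show q = (Q : ℕ) from rfl, ← coprime_map_iff h, h.apply_symm_apply,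
      Nat.coprime_comm, hR, PNat.mk_coe, ← hcop hq']
    exact hd
  refine ⟨q', hq, hq', fun x => ⟨fun hx => ?_, fun hx => ?_⟩⟩
  · rw [hcop hq', show q' = (R : ℕ) from rfl, ← h.apply_symm_apply R, coprime_map_iff h]
    exact fun c => hq.one_lt.ne' (Nat.eq_one_of_dvd_coprimes c hqR hx)
  · rw [hcop hq, show q = (Q : ℕ) from rfl, ← coprime_map_iff h]
    exact fun c => hq'.one_lt.ne' (Nat.eq_one_of_dvd_coprimes c hd hx)

theorem Assoc.unique {h : ℕ+ ≃ₜ ℕ+} {q q' q'' : ℕ} (H : Assoc h q q') (H' : Assoc h q q'') :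
    q' = q'' := by
  obtain ⟨Q, rfl⟩ : ∃ Q : ℕ+, (Q : ℕ) = q' := ⟨⟨q', H.prime'.pos⟩, rfl⟩
  have := (H'.dvd_iff (h.symm Q)).1 ((H.dvd_iff _).2 (by simp))
  rw [h.apply_symm_apply, Nat.prime_dvd_prime_iff_eq H'.prime' H.prime'] at this
  exact this.symm

theorem mem_powSet_prime {r : ℕ} (hr : r.Prime) {x : ℕ+} :
    x ∈ powSet r ↔ x ≠ 1 ∧ ∀ s : ℕ, s.Prime → s ∣ (x : ℕ) → s = r := by
  constructor
  · rintro ⟨k, hk, hx⟩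
    refine ⟨?_, fun s hs hsx => ?_⟩
    · rintro rfl
      have := Nat.one_lt_pow hk.ne' hr.one_lt
      simp only [PNat.one_coe] at hx
      omega
    · rw [hx] at hsx
      exact (Nat.prime_dvd_prime_iff_eq hs hr).1 (hs.dvd_of_dvd_pow hsx)
  · rintro ⟨h1, hs⟩
    have hx := Nat.eq_prime_pow_of_unique_prime_dvd x.ne_zero fun {d} => hs d
    refine ⟨_, Nat.pos_of_ne_zero fun h0 => h1 ?_, hx⟩
    rw [h0, pow_zero] at hx
    exact PNat.coe_eq_one_iff.1 hx

theorem Assoc.map_mem_powSet {h : ℕ+ ≃ₜ ℕ+} {q q' : ℕ} (H : Assoc h q q') {x : ℕ+}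
    (hx : x ∈ powSet q) : h x ∈ powSet q' := by
  obtain ⟨h1, hs⟩ := (mem_powSet_prime H.prime).1 hx
  refine (mem_powSet_prime H.prime').2 ⟨?_, fun s hs' hsx => ?_⟩
  · rw [← map_one h, Ne, h.injective.eq_iff]
    exact h1
  · obtain ⟨r, hr⟩ := exists_assoc h.symm hs'
    have hr := hr.symm
    simp only [Homeomorph.symm_symm] at hr
    have : r = q := hs r hr.prime ((hr.dvd_iff x).2 hsx)
    subst this
    exact hr.unique H

theorem Assoc.image_powSet {h : ℕ+ ≃ₜ ℕ+} {q q' : ℕ} (H : Assoc h q q') :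
    h '' powSet q = powSet q' := by
  refine Set.Subset.antisymm (Set.image_subset_iff.2 fun x hx => H.map_mem_powSet hx) ?_
  exact fun y hy => ⟨h.symm y, H.symm.map_mem_powSet hy, h.apply_symm_apply y⟩

/-! ### The adic topologies are preserved -/

/-- The `q`-adic closure of `A` in `ℕ \ qℕ`, described by congruences. -/
def adicCl (q : ℕ) (A : Set ℕ+) : Set ℕ+ :=
  {x | ¬ q ∣ (x : ℕ) ∧ ∀ k : ℕ, ∃ a ∈ A, (a : ℕ) ≡ x [MOD q ^ k]}

/-- For distinct powers `u`, `v` of `q`, the filter of the triple `x, u, v` sees the `q`-adic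
neighbourhoods of `x`, up to multiples of `q` and divisibility by other primes. -/
theorem mem_tri_iff {q : ℕ} (hq : q.Prime) {x u v : ℕ+} (hx : ¬ q ∣ (x : ℕ)) (hu : u ∈ powSet q)
    (hv : v ∈ powSet q) (huv : u ≠ v) {S : Set ℕ+} :
    S ∈ tri x u v ↔ ∃ Q k : ℕ, 0 < Q ∧ ¬ q ∣ Q ∧
      ∀ w ∈ radMul Q, (q ∣ (w : ℕ) ∨ (w : ℕ) ≡ x [MOD q ^ k]) → w ∈ S := by
  constructor
  · intro hS
    obtain ⟨S₁, h₁, S', h', rfl⟩ := Filter.mem_inf_iff.1 hS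
    obtain ⟨S₂, h₂, S₃, h₃, rfl⟩ := Filter.mem_inf_iff.1 h'
    obtain ⟨b₁, hb₁, c₁, H₁⟩ := exists_modulus_of_mem_clNhds h₁
    obtain ⟨b₂, hb₂, c₂, H₂⟩ := exists_modulus_of_mem_clNhds h₂
    obtain ⟨b₃, hb₃, c₃, H₃⟩ := exists_modulus_of_mem_clNhds h₃
    have hpow : ∀ {u : ℕ+}, u ∈ powSet q → q ∣ (u : ℕ) := by
      rintro u ⟨k, hk, hu⟩
      rw [hu]
      exact dvd_pow_self q hk.ne'
    have hqb₂ : ¬ q ∣ b₂ := fun hd =>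
      hq.one_lt.ne' (Nat.eq_one_of_dvd_coprimes c₂ (hpow hu) hd)
    have hqb₃ : ¬ q ∣ b₃ := fun hd =>
      hq.one_lt.ne' (Nat.eq_one_of_dvd_coprimes c₃ (hpow hv) hd)
    obtain ⟨k, B, hqB, hb₁B⟩ := Nat.exists_eq_pow_mul_and_not_dvd hb₁.ne' q hq.one_lt.ne'
    have hB0 : 0 < B := Nat.pos_of_ne_zero (by rintro rfl; simp at hqB)
    refine ⟨B * (b₂ * b₃), k, by positivity, by rw [hq.dvd_mul, hq.dvd_mul]; tauto, ?_⟩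
    intro w hw hwq
    refine ⟨?_, ?_, ?_⟩
    · rcases hwq with hwq | hwq
      · refine H₁ (B * (b₂ * b₃) * q ^ k) 1 w ⟨b₂ * b₃, by rw [hb₁B]; ring⟩ ?_ Nat.modEq_one
        intro r hr hrd
        rcases (hr.dvd_mul).1 hrd with hrd | hrd
        · exact hw r hr hrd
        · rwa [(Nat.prime_dvd_prime_iff_eq hr hq).1 (hr.dvd_of_dvd_pow hrd)]
      · exact H₁ _ (q ^ k) w ⟨b₂ * b₃, by rw [hb₁B]; ring⟩ hw hwq
    · exact H₂ _ 1 w ⟨B * b₃, by ring⟩ hw Nat.modEq_one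
    · exact H₃ _ 1 w ⟨B * b₂, by ring⟩ hw Nat.modEq_one
  · rintro ⟨Q, k, hQ, hqQ, hS⟩
    have h1 : radMul Q ∈ tri x u v := radMul_mem_of_primes hQ fun r hr hrQ => by
      have hne : ∀ {u : ℕ+}, u ∈ powSet q → ¬ r ∣ (u : ℕ) := fun hu hd =>
        hqQ (((mem_powSet_prime hq).1 hu).2 r hr hd ▸ hrQ)
      exact mem_inf_of_right (multiples_mem_inf hr huv (hne hu) (hne hv))
    filter_upwards [h1, mem_inf_of_left (mem_clNhds_of_not_dvd hq hx k)] with w hw1 hw2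
    exact hS w hw1 hw2

/-- A description of the `q`-adic closure in terms of the filters `tri`, hence of the Golomb
topology alone. -/
theorem mem_adicCl_iff {q : ℕ} (hq : q.Prime) {x u v : ℕ+} (hx : ¬ q ∣ (x : ℕ))
    (hu : u ∈ powSet q) (hv : v ∈ powSet q) (huv : u ≠ v) {A : Set ℕ+} :
    x ∈ adicCl q A ↔ ∀ S ∈ tri x u v, ∃ a ∈ A, ¬ q ∣ (a : ℕ) ∧ ∀ S' ∈ tri a u v,
      ∃ w ∈ S ∩ S', ¬ q ∣ (w : ℕ) := by
  have hmod : ∀ {a b k : ℕ}, a ≡ b [MOD q ^ (k + 1)] → ¬ q ∣ b → ¬ q ∣ a := fun h hb ha =>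
    hb (((h.of_dvd (dvd_pow_self q (Nat.succ_ne_zero _))).dvd_iff dvd_rfl).1 ha)
  constructor
  · rintro ⟨-, hA⟩ S hS
    obtain ⟨Q, k, hQ, hqQ, HS⟩ := (mem_tri_iff hq hx hu hv huv).1 hS
    obtain ⟨a, haA, hax⟩ := hA (k + 1)
    have hqa : ¬ q ∣ (a : ℕ) := hmod hax hx
    refine ⟨a, haA, hqa, fun S' hS' => ?_⟩
    obtain ⟨Q', k', hQ', hqQ', HS'⟩ := (mem_tri_iff hq hqa hu hv huv).1 hS'
    have hqQQ : ¬ q ∣ Q * Q' := by rw [hq.dvd_mul]; tauto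
    have hcop : Nat.Coprime (Q * Q') (q ^ (k + k' + 1)) :=
      ((Nat.Prime.coprime_iff_not_dvd hq).2 hqQQ).symm.pow_right _
    obtain ⟨w, hw1, hw2⟩ := Nat.chineseRemainder hcop 0 a
    have hqw : ¬ q ∣ w := hmod hw2 hqa
    have hw0 : 0 < w := Nat.pos_of_ne_zero (by rintro rfl; simp at hqw)
    have hdvd : Q * Q' ∣ w := (Nat.modEq_zero_iff_dvd).1 hw1
    refine ⟨⟨w, hw0⟩, ⟨HS _ (fun r _ hr => hr.trans ((Dvd.intro _ rfl).trans hdvd)) (Or.inr ?_),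
      HS' _ (fun r _ hr => hr.trans ((Dvd.intro_left _ rfl).trans hdvd)) (Or.inr ?_)⟩, hqw⟩
    · exact (hw2.of_dvd (pow_dvd_pow q (by omega))).trans (hax.of_dvd (pow_dvd_pow q (by omega)))
    · exact hw2.of_dvd (pow_dvd_pow q (by omega))
  · intro H
    refine ⟨hx, fun k => ?_⟩
    obtain ⟨a, haA, hqa, Ha⟩ := H _ (mem_inf_of_left (mem_clNhds_of_not_dvd hq hx k))
    obtain ⟨w, ⟨h1, h2⟩, hqw⟩ := Ha _ (mem_inf_of_left (mem_clNhds_of_not_dvd hq hqa k))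
    exact ⟨a, haA, (h2.resolve_left hqw).symm.trans (h1.resolve_left hqw)⟩

theorem Assoc.map_mem_adicCl {h : ℕ+ ≃ₜ ℕ+} {q q' : ℕ} (H : Assoc h q q') {A : Set ℕ+} {x : ℕ+}
    (hx : x ∈ adicCl q A) : h x ∈ adicCl q' (h '' A) := by
  have hqx := hx.1
  have hq'x : ¬ q' ∣ (h x : ℕ) := fun hd => hqx ((H.dvd_iff x).2 hd)
  obtain ⟨u, hu⟩ : ∃ u : ℕ+, (u : ℕ) = q := ⟨⟨q, H.prime.pos⟩, rfl⟩
  have huq : u ∈ powSet q := ⟨1, one_pos, by simp [hu]⟩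
  have hvq : u ^ 2 ∈ powSet q := ⟨2, two_pos, by simp [hu]⟩
  have huv : u ≠ u ^ 2 := by
    intro he
    have h1 : q = q ^ 2 := by simpa [hu] using congrArg (fun z : ℕ+ => (z : ℕ)) he
    have := H.prime.one_lt
    nlinarith
  have huv' : h u ≠ h (u ^ 2) := fun he => huv (h.injective he)
  rw [mem_adicCl_iff H.prime' hq'x (H.map_mem_powSet huq) (H.map_mem_powSet hvq) huv']
  intro S hS
  rw [← map_tri, Filter.mem_map] at hS
  obtain ⟨a, haA, hqa, Ha⟩ := (mem_adicCl_iff H.prime hqx huq hvq huv).1 hx _ hS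
  refine ⟨h a, Set.mem_image_of_mem h haA, fun hd => hqa ((H.dvd_iff a).2 hd), fun S' hS' => ?_⟩
  rw [← map_tri, Filter.mem_map] at hS'
  obtain ⟨w, ⟨h1, h2⟩, hqw⟩ := Ha _ hS'
  exact ⟨h w, ⟨h1, h2⟩, fun hd => hqw ((H.dvd_iff w).2 hd)⟩

theorem Assoc.image_adicCl {h : ℕ+ ≃ₜ ℕ+} {q q' : ℕ} (H : Assoc h q q') (A : Set ℕ+) :
    h '' adicCl q A = adicCl q' (h '' A) := by
  refine Set.Subset.antisymm (Set.image_subset_iff.2 fun x hx => H.map_mem_adicCl hx) ?_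
  intro y hy
  refine ⟨h.symm y, ?_, h.apply_symm_apply y⟩
  have := H.symm.map_mem_adicCl hy
  rwa [Set.image_image, show (fun a => h.symm (h a)) = id from funext h.symm_apply_apply,
    Set.image_id] at this

/-! ### The adic closure and congruences -/

theorem exists_nbhd_padicTop {q : ℕ} {y : Np q} {t : Set (Np q)}
    (ht : @IsOpen _ (padicTop q) t) (hy : y ∈ t) :
    ∃ n : ℕ, ∀ z : Np q, ((y : ℕ+) : ℕ) ≤ (z : ℕ+) → ((z : ℕ+) : ℕ) ≡ (y : ℕ+) [MOD q ^ n] →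
      z ∈ t := by
  induction ht with
  | basic s hs =>
    obtain ⟨x, n, -, -, rfl⟩ := hs
    obtain ⟨k, hk⟩ := hy
    refine ⟨n, fun z hyz hz => ?_⟩
    obtain ⟨m, hm⟩ := (Nat.modEq_iff_dvd' hyz).1 hz.symm
    refine ⟨k + m, ?_⟩
    rw [mul_add, ← hm]
    omega
  | univ => exact ⟨0, fun _ _ _ => trivial⟩
  | inter s t _ _ hs ht =>
    obtain ⟨n, hn⟩ := hs hy.1
    obtain ⟨m, hm⟩ := ht hy.2
    exact ⟨n + m, fun z hyz hz => ⟨hn z hyz (hz.of_dvd (pow_dvd_pow q (by omega))),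
      hm z hyz (hz.of_dvd (pow_dvd_pow q (by omega)))⟩⟩
  | sUnion S _ hS =>
    obtain ⟨s, hs, hys⟩ := hy
    obtain ⟨n, hn⟩ := hS s hs hys
    exact ⟨n, fun z hyz hz => ⟨s, hs, hn z hyz hz⟩⟩

theorem padicClosure_eq {q : ℕ} (hq : q.Prime) (A : Set ℕ+) : padicClosure q A = adicCl q A := by
  let := padicTop q
  ext x
  constructor
  · rintro ⟨y, hy, rfl⟩
    refine ⟨y.2, fun k => ?_⟩
    have hopen : IsOpen {z : Np q | ∃ j : ℕ, ((z : ℕ+) : ℕ) = (y : ℕ+) + q ^ (k + 1) * j} :=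
      TopologicalSpace.isOpen_generateFrom_of_mem ⟨_, k + 1, (y : ℕ+).pos, k.succ_pos, rfl⟩
    obtain ⟨z, ⟨j, hj⟩, hz⟩ := mem_closure_iff.1 hy _ hopen ⟨0, by simp⟩
    refine ⟨z, hz, ?_⟩
    rw [hj]
    refine Nat.ModEq.of_dvd (pow_dvd_pow q k.le_succ) ?_
    simp [Nat.ModEq]
  · rintro ⟨hqx, hA⟩
    refine ⟨⟨x, hqx⟩, mem_closure_iff.2 fun t ht hxt => ?_, rfl⟩
    obtain ⟨n, hn⟩ := exists_nbhd_padicTop ht hxt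
    -- With `q ^ k > x`, a number congruent to `x` modulo `q ^ k` cannot be smaller than `x`.
    obtain ⟨a, haA, ha⟩ := hA (n + x + 1)
    have hqa : ¬ q ∣ (a : ℕ) := fun hd =>
      hqx (((ha.of_dvd (dvd_pow_self q (Nat.succ_ne_zero _))).dvd_iff dvd_rfl).1 hd)
    refine ⟨⟨a, hqa⟩, hn ⟨a, hqa⟩ ?_ (ha.of_dvd (pow_dvd_pow q (by omega))), haA⟩
    by_contra hlt
    have hlt : (a : ℕ) < x := not_le.1 hlt
    have hlarge : (n + x + 1 : ℕ) < q ^ (n + x + 1 : ℕ) := Nat.lt_pow_self hq.one_lt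
    have := Nat.ModEq.eq_of_lt_of_lt ha (by omega) (by omega)
    omega

theorem mem_clPow {q a : ℕ} (hq : q.Prime) (ha : 0 < a) {x : ℕ+} :
    x ∈ clPow q a ↔ ¬ q ∣ (x : ℕ) ∧ ∀ k : ℕ, ∃ n : ℕ, 0 < n ∧ a ^ n ≡ x [MOD q ^ k] := by
  rw [clPow, padicClosure_eq hq]
  refine and_congr_right fun _ => forall_congr' fun k => ?_
  constructor
  · rintro ⟨y, ⟨n, hn, hy⟩, h⟩
    exact ⟨n, hn, hy ▸ h⟩
  · rintro ⟨n, hn, h⟩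
    exact ⟨⟨a ^ n, pow_pos ha n⟩, ⟨n, hn, rfl⟩, h⟩

/-! ### Stability of the closure of the powers -/

theorem one_add_pow_expand (x : ℤ) (n : ℕ) : ∃ k : ℤ, (1 + x) ^ n = 1 + n * x + x ^ 2 * k := by
  induction n with
  | zero => exact ⟨0, by simp⟩
  | succ n ih =>
    obtain ⟨k, hk⟩ := ih
    refine ⟨n + k + x * k, ?_⟩
    rw [pow_succ, hk]
    push_cast
    ring

/-- Raising to the power `q ^ j` shifts the `q`-adic valuation of `c - 1` by exactly `j`; the
assumption that the valuation is at least `2` also covers `q = 2`. -/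
theorem pow_prime_pow_eq {q : ℕ} {u : ℤ} (hu : ¬ (q : ℤ) ∣ u) {s : ℕ}
    (hs : 2 ≤ s) (j : ℕ) :
    ∃ v : ℤ, ¬ (q : ℤ) ∣ v ∧ (1 + (q : ℤ) ^ s * u) ^ (q ^ j) = 1 + (q : ℤ) ^ (s + j) * v := by
  induction j with
  | zero => exact ⟨u, hu, by simp⟩
  | succ j ih =>
    obtain ⟨v, hv, h⟩ := ih
    obtain ⟨k, hk⟩ := one_add_pow_expand ((q : ℤ) ^ (s + j) * v) q
    obtain ⟨i, hi⟩ : ∃ i, s + j = i + 2 := ⟨s + j - 2, by omega⟩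
    refine ⟨v + q * ((q : ℤ) ^ i * v ^ 2 * k), fun hd => hv ?_, ?_⟩
    · exact (Int.dvd_add_left (Dvd.intro _ rfl)).1 hd
    · rw [pow_succ, pow_mul, h, hk, ← add_assoc, hi]
      ring

/-- Successive approximation of `y` by powers of `b`. -/
theorem exists_pow_modEq {q : ℕ} (hq : q.Prime) {b y : ℤ} (hb : ¬ (q : ℤ) ∣ b) {s n : ℕ}
    (hs : 2 ≤ s) {u : ℤ} (hu : ¬ (q : ℤ) ∣ u) (hbn : b ^ n = 1 + (q : ℤ) ^ s * u) {t : ℕ}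
    (ht : (q : ℤ) ^ s ∣ y - b ^ t) (j : ℕ) : ∃ t' : ℕ, t ≤ t' ∧ (q : ℤ) ^ (s + j) ∣ y - b ^ t' := by
  have hqZ : Prime (q : ℤ) := Nat.prime_iff_prime_int.1 hq
  induction j with
  | zero => exact ⟨t, le_rfl, by simpa using ht⟩
  | succ j ih =>
    obtain ⟨t', htt', d, hd⟩ := ih
    obtain ⟨v, hv, hvj⟩ := pow_prime_pow_eq hu hs j
    -- Solve `b ^ t' * v * i ≡ d` modulo `q`.
    have hunit : ¬ (q : ℤ) ∣ b ^ t' * v := fun h =>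
      (hqZ.dvd_or_dvd h).elim (fun h => hb (hqZ.dvd_of_dvd_pow h)) hv
    have : Fact q.Prime := ⟨hq⟩
    have hne : ((b ^ t' * v : ℤ) : ZMod q) ≠ 0 := by
      rwa [Ne, ZMod.intCast_zmod_eq_zero_iff_dvd]
    set i : ℕ := ((d : ZMod q) * ((b ^ t' * v : ℤ) : ZMod q)⁻¹).val with hi
    have hdi : (q : ℤ) ∣ d - b ^ t' * v * i := by
      rw [← ZMod.intCast_zmod_eq_zero_iff_dvd]
      push_cast at hne ⊢
      rw [hi, ZMod.natCast_zmod_val]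
      push_cast
      rw [mul_comm, mul_assoc, inv_mul_cancel₀ hne, mul_one, sub_self]
    obtain ⟨e, he⟩ := hdi
    obtain ⟨k, hk⟩ := one_add_pow_expand ((q : ℤ) ^ (s + j) * v) i
    obtain ⟨l, hl⟩ : ∃ l, s + j = l + 1 := ⟨s + j - 1, by omega⟩
    refine ⟨t' + n * q ^ j * i, by omega, e - (q : ℤ) ^ l * v ^ 2 * k * b ^ t', ?_⟩
    rw [pow_add, pow_mul, pow_mul, hbn, hvj, hk]
    have hd' : y = b ^ t' + (q : ℤ) ^ (s + j) * d := by linarith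
    have he' : d = b ^ t' * v * i + q * e := by linarith
    rw [hd', he', ← add_assoc, hl]
    ring

/-- The `q`-adic closure of the powers of `a > 1` is an open subgroup, so that it depends only on
the residue of `a` modulo a high power of `q`. -/
theorem exists_clPow_eq {q : ℕ} (hq : q.Prime) {a : ℕ} (ha : 1 < a) (hqa : ¬ q ∣ a) :
    ∃ K : ℕ, 0 < K ∧ ∀ b : ℕ, 0 < b → b ≡ a [MOD q ^ K] → clPow q b = clPow q a := by
  have hqZ : Prime (q : ℤ) := Nat.prime_iff_prime_int.1 hq
  set n : ℕ := Nat.totient (q ^ 2) with hn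
  have hn0 : 0 < n := Nat.totient_pos.2 (pow_pos hq.pos 2)
  have hcop : Nat.Coprime a (q ^ 2) := ((hq.coprime_iff_not_dvd).2 hqa).symm.pow_right 2
  have h1 : 1 < a ^ n := Nat.one_lt_pow hn0.ne' ha
  obtain ⟨s, u, hqu, hsu⟩ := Nat.exists_eq_pow_mul_and_not_dvd (n := a ^ n - 1) (by omega) q
    hq.one_lt.ne'
  have hs2 : 2 ≤ s := by
    have hdvd : q ^ 2 ∣ a ^ n - 1 :=
      (Nat.modEq_iff_dvd' h1.le).1 (Nat.ModEq.pow_totient hcop).symm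
    rw [hsu] at hdvd
    have := (Nat.Coprime.pow_left 2 ((hq.coprime_iff_not_dvd).2 hqu)).dvd_of_dvd_mul_right hdvd
    exact (Nat.pow_dvd_pow_iff_le_right hq.one_lt).1 this
  have han : (a : ℤ) ^ n = 1 + (q : ℤ) ^ s * u := by
    have : a ^ n = 1 + q ^ s * u := by omega
    exact_mod_cast this
  have hquZ : ¬ (q : ℤ) ∣ (u : ℤ) := by exact_mod_cast hqu
  -- Powers of `c ≡ a` approximate whatever is congruent to a power of `a` modulo `q ^ (s + 1)`.
  have main : ∀ b c : ℕ, 0 < b → 0 < c → b ≡ a [MOD q ^ (s + 1)] → c ≡ a [MOD q ^ (s + 1)] →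
      clPow q b ⊆ clPow q c := by
    intro b c hb hc hba hca y hy
    obtain ⟨hqy, hy⟩ := (mem_clPow hq hb).1 hy
    obtain ⟨t, ht0, ht⟩ := hy (s + 1)
    have hct : c ^ t ≡ y [MOD q ^ (s + 1)] := ((hca.trans hba.symm).pow t).trans ht
    have hqc : ¬ (q : ℤ) ∣ (c : ℤ) := by
      intro hd
      exact hqa (((hca.of_dvd (dvd_pow_self q (Nat.succ_ne_zero _))).dvd_iff dvd_rfl).1
        (by exact_mod_cast hd))
    obtain ⟨e, he⟩ := Nat.modEq_iff_dvd.1 (hca.pow n)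
    push_cast at he
    have hcn : (c : ℤ) ^ n = 1 + (q : ℤ) ^ s * (u - q * e) := by
      rw [han] at he
      rw [show (c : ℤ) ^ n = 1 + (q : ℤ) ^ s * u - (q : ℤ) ^ (s + 1) * e by linarith]
      ring
    have hqu' : ¬ (q : ℤ) ∣ (u : ℤ) - q * e := fun hd =>
      hquZ ((Int.dvd_iff_dvd_of_dvd_sub hd).2 (Dvd.intro _ rfl))
    have hdt : (q : ℤ) ^ s ∣ (y : ℕ) - (c : ℤ) ^ t := by
      have := Nat.modEq_iff_dvd.1 (hct.of_dvd (pow_dvd_pow q s.le_succ))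
      exact_mod_cast this
    refine (mem_clPow hq hc).2 ⟨hqy, fun k => ?_⟩
    obtain ⟨t', htt', ht'⟩ := exists_pow_modEq hq hqc hs2 hqu' hcn hdt k
    refine ⟨t', by omega, Nat.ModEq.of_dvd (pow_dvd_pow q (show k ≤ s + k by omega)) ?_⟩
    rw [Nat.modEq_iff_dvd]
    exact_mod_cast ht'
  exact ⟨s + 1, s.succ_pos, fun b hb hba => Set.Subset.antisymm
    (main b a hb (by omega) hba rfl) (main a b (by omega) hb rfl hba)⟩

/-! ### Images of closures of powers -/

/-- The prime powers `r ^ j` close to `x` satisfy `clPow q x = clPow q (r ^ j) ⊆ clPow q r`, and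
`clPow q r`, the closure of a prime-power class, is mapped to a set of the same kind; Dirichlet's
theorem allows the image class to be that of a prime as close to `h x` as desired. -/
theorem Assoc.image_clPow_subset {h : ℕ+ ≃ₜ ℕ+} {q q' : ℕ} (H : Assoc h q q') {x : ℕ+}
    (hx1 : x ≠ 1) (hqx : ¬ q ∣ (x : ℕ)) : h '' clPow q x ⊆ clPow q' (h x) := by
  have hgt : ∀ {x : ℕ+}, x ≠ 1 → 1 < (x : ℕ) := fun hx =>
    lt_of_le_of_ne (PNat.pos _) fun he => hx (PNat.coe_eq_one_iff.1 he.symm)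
  have hx1' : h x ≠ 1 := by
    rw [← map_one h, Ne, h.injective.eq_iff]
    exact hx1
  have hq'x : ¬ q' ∣ (h x : ℕ) := fun hd => hqx ((H.dvd_iff x).2 hd)
  obtain ⟨K', hK'0, hK'⟩ := exists_clPow_eq H.prime' (hgt hx1') hq'x
  obtain ⟨K, hK0, hK⟩ := exists_clPow_eq H.prime (hgt hx1) hqx
  -- By Dirichlet's theorem `h x` is a `q'`-adic limit of primes.
  set A : Set ℕ+ := {r | (r : ℕ).Prime ∧ (r : ℕ) ≡ h x [MOD q' ^ K']} with hA
  have hlim : h x ∈ adicCl q' A := by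
    refine ⟨hq'x, fun k => ?_⟩
    obtain ⟨r, -, hr, hrx⟩ := Nat.forall_exists_prime_gt_and_modEq 0
      (q := q' ^ (K' + k)) (a := h x) (pow_pos H.prime'.pos _).ne'
      (((H.prime'.coprime_iff_not_dvd).2 hq'x).symm.pow_right _)
    exact ⟨⟨r, hr.pos⟩, ⟨hr, hrx.of_dvd (pow_dvd_pow q' (by omega))⟩,
      hrx.of_dvd (pow_dvd_pow q' (by omega))⟩
  have hlim' := H.symm.map_mem_adicCl hlim
  rw [h.symm_apply_apply] at hlim'
  obtain ⟨y, ⟨r', ⟨hr', hr'x⟩, rfl⟩, hy⟩ := hlim'.2 K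
  obtain ⟨r, hr⟩ := exists_assoc h.symm hr'
  have hr2 : Assoc h r r' := by simpa using hr.symm
  have hmem : h.symm r' ∈ powSet r := hr.map_mem_powSet ⟨1, one_pos, by simp⟩
  obtain ⟨j, hj0, hj⟩ := hmem
  have hsub : clPow q x ⊆ clPow q r := by
    rw [← hK (h.symm r') (PNat.pos _) hy, hj]
    intro z hz
    obtain ⟨hqz, hz⟩ := (mem_clPow H.prime (pow_pos hr2.prime.pos j)).1 hz
    refine (mem_clPow H.prime hr2.prime.pos).2 ⟨hqz, fun k => ?_⟩
    obtain ⟨n, hn, hnz⟩ := hz k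
    exact ⟨j * n, Nat.mul_pos hj0 hn, by rwa [pow_mul]⟩
  calc h '' clPow q x ⊆ h '' clPow q r := Set.image_mono hsub
    _ = clPow q' r' := by
      rw [clPow, clPow, padicClosure_eq H.prime, padicClosure_eq H.prime', H.image_adicCl,
        hr2.image_powSet]
    _ = clPow q' (h x) := hK' r' r'.pos hr'x

theorem Assoc.image_clPow {h : ℕ+ ≃ₜ ℕ+} {q q' : ℕ} (H : Assoc h q q') {x : ℕ+}
    (hx1 : x ≠ 1) (hqx : ¬ q ∣ (x : ℕ)) : h '' clPow q x = clPow q' (h x) := by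
  refine Set.Subset.antisymm (H.image_clPow_subset hx1 hqx) fun y hy => ?_
  have hx1' : h x ≠ 1 := by
    rw [← map_one h, Ne, h.injective.eq_iff]
    exact hx1
  have := H.symm.image_clPow_subset hx1' fun hd => hqx ((H.dvd_iff x).2 hd)
  rw [h.symm_apply_apply] at this
  exact ⟨h.symm y, this ⟨y, hy, rfl⟩, h.apply_symm_apply y⟩

/-! ### Primes are mapped to primes -/

/-- If `h p = p' ^ k` with `k ≥ 2`, choose a prime power `q' ^ j` dividing `p' ^ k - 1` but not
`p' - 1`. The `q'`-adic closures of the powers of `p'` and of `p' ^ k` are both the image of the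
`q`-adic closure of the powers of `p`, but modulo `q' ^ j` every power of `p' ^ k` is `1`, while `p'` is not. -/
theorem assoc_apply (h : ℕ+ ≃ₜ ℕ+) {p : ℕ+} (hp : (p : ℕ).Prime) : Assoc h p (h p) := by
  obtain ⟨p', H⟩ := exists_assoc h hp
  have hppow : p ∈ powSet (p : ℕ) := ⟨1, one_pos, by simp⟩
  obtain ⟨k, hk0, hk⟩ := H.map_mem_powSet hppow
  obtain rfl | hk2 : k = 1 ∨ 2 ≤ k := by omega
  · rw [pow_one] at hk
    rwa [hk]
  exfalso
  have hp'1 := H.prime'.one_lt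
  have hlt : p' < p' ^ k := lt_self_pow₀ hp'1 (by omega)
  have hnd : ¬ p' ^ k - 1 ∣ p' - 1 := fun hd => by
    have := Nat.le_of_dvd (by omega) hd
    omega
  obtain ⟨q', j, hq', hd, hd'⟩ : ∃ q' j : ℕ, q'.Prime ∧ q' ^ j ∣ p' ^ k - 1 ∧
      ¬ q' ^ j ∣ p' - 1 := by
    by_contra hcon
    push Not at hcon
    exact hnd ((Nat.dvd_iff_prime_pow_dvd_dvd _ _).2 fun q' j hq' => hcon q' j hq')
  have hmod : 1 ≡ p' ^ k [MOD q' ^ j] := (Nat.modEq_iff_dvd' (by omega)).2 hd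
  have hj0 : j ≠ 0 := by
    rintro rfl
    simp at hd'
  have hq'p' : ¬ q' ∣ p' := by
    intro hq
    have := ((hmod.of_dvd (dvd_pow_self q' hj0)).dvd_iff dvd_rfl).2 (dvd_pow hq hk0.ne')
    exact hq'.one_lt.ne' (Nat.dvd_one.1 this)
  obtain ⟨q, hq⟩ := exists_assoc h.symm hq'
  have Hq : Assoc h q q' := by simpa using hq.symm
  have hqp : ¬ q ∣ (p : ℕ) := by
    rw [Hq.dvd_iff, hk]
    exact fun hd => hq'p' (hq'.dvd_of_dvd_pow hd)
  have hp1 : p ≠ 1 := by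
    rintro rfl
    exact Nat.not_prime_one hp
  have h1 : h '' clPow q p = clPow q' (p' ^ k) := by
    rw [Hq.image_clPow hp1 hqp, hk]
  have h2 : h '' clPow q p = clPow q' p' := by
    rw [clPow, clPow, padicClosure_eq Hq.prime, padicClosure_eq Hq.prime', Hq.image_adicCl,
      H.image_powSet]
  obtain ⟨P, hP⟩ : ∃ P : ℕ+, (P : ℕ) = p' := ⟨⟨p', H.prime'.pos⟩, rfl⟩
  have hmem : P ∈ clPow q' (p' ^ k) := by
    rw [← h1, h2, mem_clPow hq' H.prime'.pos, hP]
    exact ⟨hq'p', fun _ => ⟨1, one_pos, by rw [pow_one]⟩⟩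
  obtain ⟨n, -, hn⟩ := ((mem_clPow hq' (pow_pos H.prime'.pos k)).1 hmem).2 j
  have h3 : 1 ≡ p' [MOD q' ^ j] := by
    have := (hmod.pow n).trans hn
    simpa [hP] using this
  exact hd' ((Nat.modEq_iff_dvd' (by omega)).1 h3)

end GolombRigid

/-- A homeomorphism `h` of the Golomb space maps the closure of `a^ℕ` in the `p`-adic
topology on `ℕ \ pℕ` onto the closure of `h(a)^ℕ` in the `h(p)`-adic topology on
`ℕ \ h(p)ℕ`; consequently `X ↦ h(X)` is an order isomorphism of the poset `𝒳_p`
(ordered by reverse inclusion) onto the poset `𝒳_{h(p)}`. -/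
theorem golomb_homeo_XX_orderIso (h : ℕ+ ≃ₜ ℕ+) (p : ℕ+) (hp : (p : ℕ).Prime) :
    (∀ (a : ℕ) (ha : 0 < a), a ≠ 1 → ¬ (p : ℕ) ∣ a →
      h '' clPow (p : ℕ) a = clPow (↑(h p) : ℕ) (↑(h ⟨a, ha⟩) : ℕ)) ∧
    Set.BijOn (fun X : Set ℕ+ => h '' X) (XX (p : ℕ)) (XX (↑(h p) : ℕ)) ∧
    (∀ X ∈ XX (p : ℕ), ∀ Y ∈ XX (p : ℕ), X ⊆ Y ↔ h '' X ⊆ h '' Y) := by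
  have H := GolombRigid.assoc_apply h hp
  have key : ∀ (a : ℕ) (ha : 0 < a), a ≠ 1 → ¬ (p : ℕ) ∣ a →
      h '' clPow (p : ℕ) a = clPow (↑(h p) : ℕ) (↑(h ⟨a, ha⟩) : ℕ) := by
    intro a ha ha1 hpa
    exact H.image_clPow (x := ⟨a, ha⟩) (fun he => ha1 (congrArg PNat.val he)) hpa
  refine ⟨key, ⟨?_, fun X _ Y _ hXY => Set.image_injective.2 h.injective hXY, ?_⟩,
    fun X _ Y _ => (Set.image_subset_image_iff h.injective).symm⟩
  · rintro X ⟨a, ha, ha1, hpa, rfl⟩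
    refine ⟨h ⟨a, ha⟩, PNat.pos _, fun he => ha1 ?_, ?_, key a ha ha1 hpa⟩
    · rw [PNat.coe_eq_one_iff, ← GolombRigid.map_one h] at he
      exact congrArg PNat.val (h.injective he)
    · exact fun hd => hpa ((H.dvd_iff ⟨a, ha⟩).2 hd)
  · rintro Y ⟨b, hb, hb1, hpb, rfl⟩
    set a : ℕ+ := h.symm ⟨b, hb⟩ with ha
    have hab : h a = ⟨b, hb⟩ := h.apply_symm_apply _
    have ha1 : (a : ℕ) ≠ 1 := by
      intro he
      rw [PNat.coe_eq_one_iff.1 he, GolombRigid.map_one] at hab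
      exact hb1 (congrArg PNat.val hab).symm
    have hpa : ¬ (p : ℕ) ∣ (a : ℕ) := by
      rw [H.dvd_iff, hab]
      exact hpb
    refine ⟨clPow p a, ⟨a, a.pos, ha1, hpa, rfl⟩, ?_⟩
    have := key a a.pos ha1 hpa
    rw [show (⟨(a : ℕ), a.pos⟩ : ℕ+) = a from rfl, hab] at this
    exact this
end

section
/- Let p be a prime number. If a ∈ ℕ \ pℕ and n ∈ ℕ are such that the residue class π_n(a) has multiplicative order at least max(p,3) in the group (ℤ/p^nℤ)ˣ, then the closure of a^ℕ in the p-adic topology on ℕ \ pℕ equals ℕ ∩ π_n^{-1}(π_n(a)^ℕ), the set of positive integers whose residue modulo p^n is a power of π_n(a). -/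
/-!
The closure of `a^ℕ` consists of those `y` prime to `p` that are congruent to a power of `a` modulo
every `p ^ m`, so one has to show that a congruence `y ≡ a ^ k` modulo `p ^ n` lifts to all higher
powers of `p`.

Lifting from `p ^ m` to `p ^ (m + 1)` is possible as soon as some power `a ^ e` equals
`1 + p ^ m * u` with `p ∤ u`: the exponents `k + e * s` then move the residue of `a ^ k` through all
classes modulo `p ^ (m + 1)` above the given one (`exists_lift_step`). By the binomial theorem
(`pow_prime_exact`), raising to the `p`-th power turns such an `e` for `m` into one for `m + 1`.

To start at `m = n` (`exists_exact_base`), let `d` be the order of `a` modulo `p ^ n`. As `d` divides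
`p ^ (n - 1) * (p - 1)`, the bound `max p 3 ≤ d` forces `p ∣ d`, and `4 ∣ d` if `p = 2`.
Then `b = a ^ (d / p)` satisfies `b = 1 + p ^ i * v` with `p ∤ v`, `1 ≤ i < n`, and `2 ≤ i` if
`p = 2`. Since `b ^ p - 1` is divisible by `p ^ n` and by exactly `p ^ (i + 1)`, it follows that
`i + 1 = n`.
-/

open TopologicalSpace

/-- The condition `i + 2 ≤ i * p` says `1 ≤ i` for odd `p` and `2 ≤ i` for `p = 2`. -/
lemma pow_prime_exact {p : ℕ} (hp : p.Prime) {i : ℕ} (hi : i + 2 ≤ i * p) {b v : ℤ}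
    (hv : ¬ (p : ℤ) ∣ v) (hb : b = 1 + (p : ℤ) ^ i * v) :
    ∃ w : ℤ, ¬ (p : ℤ) ∣ w ∧ b ^ p = 1 + (p : ℤ) ^ (i + 1) * w := by
  have hi0 : i ≠ 0 := by rintro rfl; simp at hi
  obtain ⟨y, hy⟩ := ZMod.exists_one_add_mul_pow_prime_eq (R := ℤ) (u := (p : ℤ) ^ i) (v := (p : ℤ))
    hp (dvd_pow_self _ hi0) (by
      rw [← pow_mul, ← pow_succ', ← pow_succ]
      exact pow_dvd_pow _ hi) v
  refine ⟨v + p * y, ?_, by rw [hb, hy]; ring⟩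
  rwa [dvd_add_left (dvd_mul_right _ _)]

lemma dvd_of_order {p d N : ℕ} (hp : p.Prime) (hd : d ∣ p ^ N * (p - 1))
    (hord : max p 3 ≤ d) : p ∣ d ∧ (p = 2 → 4 ∣ d) := by
  have h3 : 3 ≤ d := le_trans (le_max_right _ _) hord
  have hpd : p ≤ d := le_trans (le_max_left _ _) hord
  constructor
  · by_contra h
    have hc : Nat.Coprime d (p ^ N) := (((Nat.Prime.coprime_iff_not_dvd hp).2 h).symm).pow_right N
    have h1 := Nat.le_of_dvd (by have := hp.two_le; omega) (hc.dvd_of_dvd_mul_left hd)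
    have := hp.two_le
    omega
  · rintro rfl
    simp only [Nat.add_one_sub_one, mul_one] at hd
    obtain ⟨j, -, rfl⟩ := (Nat.dvd_prime_pow Nat.prime_two).1 hd
    have : 2 ≤ j := by
      by_contra h
      have : j = 0 ∨ j = 1 := by omega
      rcases this with rfl | rfl <;> simp at h3
    exact pow_dvd_pow 2 this

lemma natCast_pow_eq_one_iff (p a m e : ℕ) :
    (a : ZMod (p ^ m)) ^ e = 1 ↔ (p : ℤ) ^ m ∣ (a : ℤ) ^ e - 1 := by
  rw [← sub_eq_zero]
  have h := ZMod.intCast_zmod_eq_zero_iff_dvd ((a : ℤ) ^ e - 1) (p ^ m)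
  push_cast at h
  exact h

/-- The hypothesis on the order yields `a ^ e - 1` of `p`-adic valuation exactly `n`. The
inequality `n + 2 ≤ n * p` is what `pow_prime_exact` needs to continue from `n`. -/
lemma exists_exact_base {p : ℕ} (hp : p.Prime) {a n : ℕ} (hpa : ¬ p ∣ a) (hn : 0 < n)
    (hord : max p 3 ≤ orderOf ((a : ZMod (p ^ n)))) :
    n + 2 ≤ n * p ∧ ∃ (e : ℕ) (u : ℤ), ¬ (p : ℤ) ∣ u ∧ (a : ℤ) ^ e = 1 + (p : ℤ) ^ n * u := by
  have hpZ : Prime (p : ℤ) := Nat.prime_iff_prime_int.1 hp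
  have hpaZ : ¬ (p : ℤ) ∣ a := by exact_mod_cast hpa
  set d := orderOf ((a : ZMod (p ^ n))) with hd
  have hdpos : 0 < d := lt_of_lt_of_le (by norm_num) (le_trans (le_max_right p 3) hord)
  have hdvd : d ∣ p ^ (n - 1) * (p - 1) := by
    rw [← Nat.totient_prime_pow hp hn]
    apply orderOf_dvd_of_pow_eq_one
    have hc : Nat.Coprime a (p ^ n) := ((hp.coprime_iff_not_dvd.2 hpa).symm).pow_right n
    have := (ZMod.natCast_eq_natCast_iff _ _ _).2 (Nat.ModEq.pow_totient hc)
    exact_mod_cast this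
  obtain ⟨⟨c, hc⟩, h4⟩ := dvd_of_order hp hdvd hord
  have hcpos : 0 < c := Nat.pos_of_ne_zero (by rintro rfl; simp at hc; omega)
  -- `b = a ^ (d / p)` has order `p` modulo `p ^ n`
  set b : ℤ := (a : ℤ) ^ c with hb
  have hb1 : ¬ (p : ℤ) ^ n ∣ b - 1 := by
    rw [hb, ← natCast_pow_eq_one_iff]
    intro h
    have := Nat.le_of_dvd hcpos (orderOf_dvd_of_pow_eq_one h)
    rw [← hd] at this
    have := hp.two_le
    nlinarith
  have hbp : (p : ℤ) ^ n ∣ b ^ p - 1 := by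
    rw [hb, ← pow_mul, ← natCast_pow_eq_one_iff, mul_comm, ← hc]
    exact pow_orderOf_eq_one _
  have hbmod : (p : ℤ) ∣ b - 1 := by
    have h1 : (p : ℤ) ∣ b ^ p - 1 := (dvd_pow_self _ hn.ne').trans hbp
    have := Fact.mk hp
    rw [← ZMod.intCast_zmod_eq_zero_iff_dvd] at h1 ⊢
    push_cast at h1 ⊢
    rwa [ZMod.pow_card] at h1
  have hb0 : b - 1 ≠ 0 := fun h => hb1 (by simp [h])
  obtain ⟨v, hbv, hv⟩ := (FiniteMultiplicity.of_prime_left hpZ hb0).exists_eq_pow_mul_and_not_dvd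
  set i := multiplicity (p : ℤ) (b - 1)
  have hi1 : i ≠ 0 := by
    intro h
    rw [h, pow_zero, one_mul] at hbv
    exact hv (hbv ▸ hbmod)
  have hin : i < n := by
    by_contra h
    exact hb1 (hbv ▸ (pow_dvd_pow _ (not_lt.1 h)).mul_right _)
  have hi : i + 2 ≤ i * p := by
    rcases hp.eq_two_or_odd' with h2 | ho
    · -- here `b` is an odd square, so `4 ∣ b - 1`
      have hi2 : i ≠ 1 := by
        intro h
        obtain ⟨f, hf⟩ := h4 h2
        have hcf : c = f * 2 := by subst h2; omega
        have ha2 : ¬ (2 : ℤ) ∣ (a : ℤ) ^ f := by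
          have := mt (hpZ.dvd_of_dvd_pow (n := f)) hpaZ
          simpa [h2] using this
        obtain ⟨g, hg⟩ : ∃ g, (a : ℤ) ^ f = 2 * g + 1 :=
          Int.not_even_iff_odd.1 (by rwa [even_iff_two_dvd])
        rw [h, hb, hcf, pow_mul, hg, h2] at hbv
        apply hv
        rw [h2]
        refine ⟨g ^ 2 + g, ?_⟩
        push_cast at hbv ⊢
        linarith
      subst h2
      omega
    · have : 3 ≤ p := by
        have := hp.two_le
        rcases ho with ⟨t, rfl⟩
        omega
      nlinarith [Nat.pos_of_ne_zero hi1]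
  obtain ⟨w, hw, hbw⟩ := pow_prime_exact hp hi hv (b := b) (by linarith)
  have hni : n = i + 1 := by
    by_contra h
    have h1 : (p : ℤ) ^ (i + 1) * p ∣ (p : ℤ) ^ (i + 1) * w := by
      rw [← pow_succ]
      refine (pow_dvd_pow _ (by omega : i + 1 + 1 ≤ n)).trans ?_
      simpa [hbw] using hbp
    exact hw ((mul_dvd_mul_iff_left (pow_ne_zero _ hpZ.ne_zero)).1 h1)
  have := hp.two_le
  refine ⟨by rw [hni]; nlinarith, c * p, w, hw, ?_⟩
  rw [pow_mul, ← hb, hbw, ← hni]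

lemma exists_exact {p : ℕ} (hp : p.Prime) {a n : ℕ} (hpa : ¬ p ∣ a) (hn : 0 < n)
    (hord : max p 3 ≤ orderOf ((a : ZMod (p ^ n)))) {m : ℕ} (hm : n ≤ m) :
    m + 2 ≤ m * p ∧ ∃ (e : ℕ) (u : ℤ), ¬ (p : ℤ) ∣ u ∧ (a : ℤ) ^ e = 1 + (p : ℤ) ^ m * u := by
  induction m, hm using Nat.le_induction with
  | base => exact exists_exact_base hp hpa hn hord
  | succ m hm ih =>
    obtain ⟨h, e, u, hu, he⟩ := ih
    obtain ⟨w, hw, hew⟩ := pow_prime_exact hp h hu he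
    have := hp.two_le
    exact ⟨by nlinarith, e * p, w, hw, by rw [pow_mul, hew]⟩

lemma one_add_pow_eq (x : ℤ) (s : ℕ) : ∃ z : ℤ, (1 + x) ^ s = 1 + s * x + x ^ 2 * z := by
  induction s with
  | zero => exact ⟨0, by simp⟩
  | succ s ih =>
    obtain ⟨z, hz⟩ := ih
    refine ⟨s + z + x * z, ?_⟩
    rw [pow_succ, hz]
    push_cast
    ring

lemma exists_lift_step {p : ℕ} (hp : p.Prime) {a m e : ℕ} (hpa : ¬ p ∣ a) (hm : 0 < m) {u : ℤ}
    (hu : ¬ (p : ℤ) ∣ u) (he : (a : ℤ) ^ e = 1 + (p : ℤ) ^ m * u) {y : ℤ} {k : ℕ}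
    (hk : (p : ℤ) ^ m ∣ y - (a : ℤ) ^ k) :
    ∃ s : ℕ, (p : ℤ) ^ (m + 1) ∣ y - (a : ℤ) ^ (k + e * s) := by
  have hpZ : Prime (p : ℤ) := Nat.prime_iff_prime_int.1 hp
  have hpaZ : ¬ (p : ℤ) ∣ a := by exact_mod_cast hpa
  have := Fact.mk hp
  obtain ⟨t, ht⟩ := hk
  -- choose `s` solving `a ^ k * u * s ≡ t` modulo `p`
  have hne : (((a : ℤ) ^ k * u : ℤ) : ZMod p) ≠ 0 := by
    rw [Ne, ZMod.intCast_zmod_eq_zero_iff_dvd]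
    exact fun h => (hpZ.dvd_or_dvd h).elim (fun h => hpaZ (hpZ.dvd_of_dvd_pow h)) hu
  set s : ℕ := ((t : ZMod p) / (((a : ℤ) ^ k * u : ℤ) : ZMod p)).val with hs
  have hts : (p : ℤ) ∣ t - (a : ℤ) ^ k * u * s := by
    rw [← ZMod.intCast_zmod_eq_zero_iff_dvd]
    have : (s : ZMod p) = (t : ZMod p) / (((a : ℤ) ^ k * u : ℤ) : ZMod p) := by
      rw [hs, ZMod.natCast_zmod_val]
    rw [Int.cast_sub, Int.cast_mul _ (s : ℤ), Int.cast_natCast, this, mul_div_cancel₀ _ hne,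
      sub_self]
  obtain ⟨q, hq⟩ := hts
  obtain ⟨z, hz⟩ := one_add_pow_eq ((p : ℤ) ^ m * u) s
  refine ⟨s, q - (a : ℤ) ^ k * (p : ℤ) ^ (m - 1) * u ^ 2 * z, ?_⟩
  have hpm : (p : ℤ) ^ m * (p : ℤ) ^ m = (p : ℤ) ^ (m + 1) * (p : ℤ) ^ (m - 1) := by
    rw [← pow_add, ← pow_add]
    congr 1
    omega
  rw [pow_add, pow_mul, he, hz]
  have hps : (p : ℤ) ^ (m + 1) = (p : ℤ) ^ m * p := pow_succ _ _
  linear_combination ht + (p : ℤ) ^ m * hq - (a : ℤ) ^ k * u ^ 2 * z * hpm - q * hps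

lemma exists_lift {p : ℕ} (hp : p.Prime) {a n : ℕ} (hpa : ¬ p ∣ a) (hn : 0 < n)
    (hord : max p 3 ≤ orderOf ((a : ZMod (p ^ n)))) {y : ℤ} {k : ℕ}
    (hk : (p : ℤ) ^ n ∣ y - (a : ℤ) ^ k) (m : ℕ) :
    ∃ j : ℕ, (p : ℤ) ^ m ∣ y - (a : ℤ) ^ j := by
  rcases le_total m n with hm | hm
  · exact ⟨k, (pow_dvd_pow _ hm).trans hk⟩
  · induction m, hm using Nat.le_induction with
    | base => exact ⟨k, hk⟩
    | succ m hm ih =>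
      obtain ⟨j, hj⟩ := ih
      obtain ⟨-, e, u, hu, he⟩ := exists_exact hp hpa hn hord hm
      obtain ⟨s, hs⟩ := exists_lift_step hp hpa (hn.trans_le hm) hu he hj
      exact ⟨_, hs⟩

/-- The exponent in a lift can be taken arbitrarily large, by adding multiples of `φ (p ^ m)`. -/
lemma exists_large_exponent {p : ℕ} (hp : p.Prime) {a m j : ℕ} (hpa : ¬ p ∣ a) {y : ℤ}
    (hj : (p : ℤ) ^ m ∣ y - (a : ℤ) ^ j) (B : ℕ) :
    ∃ k : ℕ, B < k ∧ (p : ℤ) ^ m ∣ y - (a : ℤ) ^ k := by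
  have hc : Nat.Coprime a (p ^ m) := ((hp.coprime_iff_not_dvd.2 hpa).symm).pow_right m
  have h1 : (a : ZMod (p ^ m)) ^ ((p ^ m).totient * (B + 1)) = 1 := by
    rw [pow_mul]
    have := (ZMod.natCast_eq_natCast_iff _ _ _).2 (Nat.ModEq.pow_totient hc)
    push_cast at this
    rw [this, one_pow]
  rw [natCast_pow_eq_one_iff] at h1
  have ht : 0 < (p ^ m).totient := Nat.totient_pos.2 (pow_pos hp.pos m)
  refine ⟨j + (p ^ m).totient * (B + 1), by nlinarith, ?_⟩
  have : y - (a : ℤ) ^ (j + (p ^ m).totient * (B + 1)) =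
      (y - (a : ℤ) ^ j) - (a : ℤ) ^ j * ((a : ℤ) ^ ((p ^ m).totient * (B + 1)) - 1) := by
    rw [pow_add]; ring
  rw [this]
  exact dvd_sub hj (h1.mul_left _)

/-- Every `p`-adic neighbourhood of `y` contains the trace of some progression `y + p ^ m * ℕ₀`. -/
lemma padic_open_contains {p : ℕ} {U : Set (Np p)} (hU : @IsOpen _ (padicTop p) U) {y : Np p}
    (hy : y ∈ U) : ∃ m : ℕ, ∀ z : Np p,
      (∃ t : ℕ, ((z : ℕ+) : ℕ) = ((y : ℕ+) : ℕ) + p ^ m * t) → z ∈ U := by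
  induction (hU : GenerateOpen _ U) with
  | basic S hS =>
    obtain ⟨x, n, -, -, rfl⟩ := hS
    obtain ⟨k, hk⟩ := hy
    refine ⟨n, ?_⟩
    rintro z ⟨t, ht⟩
    exact ⟨k + t, by rw [ht, hk]; ring⟩
  | univ => exact ⟨0, fun _ _ => trivial⟩
  | inter S T _ _ ihS ihT =>
    obtain ⟨m, hm⟩ := ihS hy.1
    obtain ⟨l, hl⟩ := ihT hy.2
    refine ⟨m + l, ?_⟩
    rintro z ⟨t, ht⟩
    exact ⟨hm z ⟨p ^ l * t, by rw [ht]; ring⟩, hl z ⟨p ^ m * t, by rw [ht]; ring⟩⟩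
  | sUnion 𝒮 _ ih =>
    obtain ⟨S, hS, hyS⟩ := hy
    obtain ⟨m, hm⟩ := ih S hS hyS
    exact ⟨m, fun z hz => ⟨S, hS, hm z hz⟩⟩

/-- If `π_n(a)` has multiplicative order at least `max(p,3)` in `(ℤ/p^nℤ)ˣ`, then the
closure of `a^ℕ` in the `p`-adic topology on `ℕ \ pℕ` equals `ℕ ∩ π_n⁻¹(π_n(a)^ℕ)`. -/
theorem clPow_eq_preimage_powers (p : ℕ) (hp : p.Prime) (a n : ℕ)
    (ha : 0 < a) (hpa : ¬ p ∣ a) (hn : 0 < n)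
    (hord : max p 3 ≤ orderOf ((a : ZMod (p ^ n)))) :
    clPow p a = {y : ℕ+ | ∃ k : ℕ, 0 < k ∧
      ((y : ℕ) : ZMod (p ^ n)) = (a : ZMod (p ^ n)) ^ k} := by
  let _ := padicTop p
  ext y
  constructor
  · rintro ⟨z, hz, rfl⟩
    have hopen : IsOpen {w : Np p | ∃ k : ℕ, ((w : ℕ+) : ℕ) = ((z : ℕ+) : ℕ) + p ^ n * k} :=
      GenerateOpen.basic _ ⟨_, n, z.1.pos, hn, rfl⟩
    obtain ⟨w, ⟨t, ht⟩, k, hk, hwk⟩ := mem_closure_iff.1 hz _ hopen ⟨0, by simp⟩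
    refine ⟨k, hk, ?_⟩
    have h : (((z : ℕ+) : ℕ) + p ^ n * t : ℕ) = a ^ k := ht ▸ hwk
    have h' := congrArg (Nat.cast : ℕ → ZMod (p ^ n)) h
    rw [Nat.cast_add, Nat.cast_mul, ZMod.natCast_self, zero_mul, add_zero, Nat.cast_pow] at h'
    exact h'
  · rintro ⟨k, hk, hyk⟩
    have hdvd : (p : ℤ) ^ n ∣ (y : ℕ) - (a : ℤ) ^ k := by
      have h := ZMod.intCast_zmod_eq_zero_iff_dvd (((y : ℕ) : ℤ) - (a : ℤ) ^ k) (p ^ n)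
      push_cast at h
      exact h.1 (by rw [hyk, sub_self])
    have hpy : ¬ p ∣ (y : ℕ) := by
      intro h
      have h1 : (p : ℤ) ∣ (a : ℤ) ^ k :=
        (dvd_sub_right (by exact_mod_cast h : (p : ℤ) ∣ ((y : ℕ) : ℤ))).1
          ((dvd_pow_self _ hn.ne').trans hdvd)
      exact hpa (hp.dvd_of_dvd_pow (by exact_mod_cast h1))
    have ha2 : 2 ≤ a := by
      by_contra h
      obtain rfl : a = 1 := by omega
      simp at hord
    refine ⟨⟨y, hpy⟩, mem_closure_iff.2 fun U hU hyU => ?_, rfl⟩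
    obtain ⟨m, hm⟩ := padic_open_contains hU hyU
    obtain ⟨j, hj⟩ := exists_lift hp hpa hn hord hdvd m
    obtain ⟨l, hl, hdl⟩ := exists_large_exponent hp hpa hj (y : ℕ)
    have hlt : (y : ℕ) ≤ a ^ l :=
      (hl.trans ((Nat.lt_two_pow_self).trans_le (Nat.pow_le_pow_left ha2 l))).le
    -- a large exponent places `a ^ l` in the one-sided progression `y + p ^ m * ℕ₀`
    obtain ⟨t, ht⟩ : p ^ m ∣ a ^ l - (y : ℕ) := by
      rw [← Int.natCast_dvd_natCast, Nat.cast_sub hlt, dvd_sub_comm]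
      exact_mod_cast hdl
    refine ⟨⟨⟨a ^ l, pow_pos ha l⟩, fun h => hpa (hp.dvd_of_dvd_pow h)⟩, hm _ ⟨t, ?_⟩,
      l, by omega, rfl⟩
    change a ^ l = (y : ℕ) + p ^ m * t
    omega
end

section
/- Let n ≥ 3 and m ≥ n be integers and let B be a cyclic subgroup of (ℤ/2^nℤ)ˣ of order at least 4. Then the preimage H = π_{m,n}^{-1}(B) of B under the natural projection π_{m,n} : (ℤ/2^mℤ)ˣ → (ℤ/2^nℤ)ˣ is a cyclic subgroup of (ℤ/2^mℤ)ˣ. -/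
/-!
The 2-adic valuation of `y ^ 4 - 1` is controlled when `y` is odd: `y ^ 2 + 1` is twice an odd
number, so if `y ^ 4 ≡ 1` but `y ^ 2 ≢ 1` modulo `2 ^ n`, then `2 ^ n` divides `y ^ 4 - 1` exactly
(`exists_odd_pow_four_eq`).

A generator `g` of `B` has order `4 * q`, because `B` is a 2-group with at least four elements.
Applying the valuation fact to `y = a ^ q`, where the integer `a` represents a lift `x` of `g` to
`(ℤ/2^mℤ)ˣ`, shows that `x ^ (4 * q) = 1 + 2 ^ n * u` with `u` odd. Such an element has order
`2 ^ (m - n)` (`orderOf_one_add_mul_prime_pow` in Mathlib), so `x` has order `|B| * 2 ^ (m - n)`.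
This is the order of the preimage of `B`, which has the same index as `B`; hence `x` generates it.
-/


open TopologicalSpace

/-- If an odd integer `y` satisfies `y ^ 4 ≡ 1` and `y ^ 2 ≢ 1` modulo `2 ^ n`, then the 2-adic
valuation of `y ^ 4 - 1` is exactly `n`. -/
lemma exists_odd_pow_four_eq {n : ℕ} {y : ℤ} (hy : Odd y)
    (h4 : (2 : ℤ) ^ n ∣ y ^ 4 - 1) (h2 : ¬ (2 : ℤ) ^ n ∣ y ^ 2 - 1) :
    ∃ u : ℤ, Odd u ∧ y ^ 4 = 1 + 2 ^ n * u := by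
  obtain ⟨k, rfl⟩ : ∃ k, n = k + 1 :=
    Nat.exists_eq_succ_of_ne_zero (by rintro rfl; simp at h2)
  obtain ⟨c, rfl⟩ := hy
  -- `y ^ 2 + 1 = 2 * w` with `w` odd
  set w : ℤ := 2 * (c ^ 2 + c) + 1 with hw
  have hwodd : Odd w := ⟨_, rfl⟩
  have hfac : (2 * c + 1) ^ 4 - 1 = 2 * (((2 * c + 1) ^ 2 - 1) * w) := by rw [hw]; ring
  have hk : (2 : ℤ) ^ k ∣ (2 * c + 1) ^ 2 - 1 := by
    rw [hfac, pow_succ', mul_dvd_mul_iff_left two_ne_zero] at h4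
    exact (IsCoprime.pow_left (Int.isCoprime_two_left.mpr hwodd)).dvd_of_dvd_mul_right h4
  obtain ⟨t, ht⟩ := hk
  have htodd : Odd t := by
    rw [← Int.not_even_iff_odd, even_iff_two_dvd]
    rintro ⟨s, rfl⟩
    exact h2 ⟨s, by rw [ht]; ring⟩
  refine ⟨t * w, htodd.mul hwodd, ?_⟩
  rw [ht] at hfac
  linear_combination hfac

/-- A unit of `ℤ/2^mℤ` whose image in `(ℤ/2^nℤ)ˣ` has order `4 * q` has the largest possible order:
reduction modulo `2 ^ n` divides its order by the size `2 ^ (m - n)` of the kernel. -/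
lemma orderOf_lift_two_pow {n m q : ℕ} (hn : 2 ≤ n) (hm : n ≤ m) (hq : q ≠ 0)
    (x : (ZMod (2 ^ m))ˣ) (hx : orderOf (ZMod.unitsMap (pow_dvd_pow 2 hm) x) = 4 * q) :
    orderOf x = 4 * q * 2 ^ (m - n) := by
  obtain ⟨a, ha⟩ := ZMod.intCast_surjective (x : ZMod (2 ^ m))
  have hred : ((ZMod.unitsMap (pow_dvd_pow 2 hm) x : (ZMod (2 ^ n))ˣ) : ZMod (2 ^ n)) = a := by
    rw [ZMod.unitsMap_val, ← ha, ZMod.cast_intCast (pow_dvd_pow 2 hm)]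
  have hdvd (k : ℕ) : (2 : ℤ) ^ n ∣ a ^ k - 1 ↔ 4 * q ∣ k := by
    rw [← hx, orderOf_dvd_iff_pow_eq_one, ← Units.val_inj, Units.val_pow_eq_pow_val, hred,
      Units.val_one, ← sub_eq_zero]
    have := ZMod.intCast_zmod_eq_zero_iff_dvd (a ^ k - 1) (2 ^ n)
    push_cast at this
    exact this.symm
  have haodd : Odd a := by
    have h1 : (2 : ℤ) ∣ a ^ (4 * q) - 1 :=
      (dvd_pow_self 2 (by omega)).trans ((hdvd _).mpr dvd_rfl)
    by_contra hev
    rw [Int.not_odd_iff_even, even_iff_two_dvd] at hev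
    have h2 : (2 : ℤ) ∣ a ^ (4 * q) := dvd_pow hev (by omega)
    have h3 := dvd_sub h2 h1
    norm_num at h3
  obtain ⟨u, hu, hau⟩ := exists_odd_pow_four_eq (n := n) (haodd.pow (n := q))
    (by rw [← pow_mul, hdvd, mul_comm])
    (by
      rw [← pow_mul, hdvd]
      intro h
      have := Nat.le_of_dvd (by omega) h
      omega)
  have hxu : orderOf (x ^ (4 * q)) = 2 ^ (m - n) := by
    obtain ⟨d, rfl⟩ : ∃ d, m = d + n := ⟨m - n, by omega⟩
    have key := ZMod.orderOf_one_add_mul_prime_pow Nat.prime_two n (by omega) (by omega) u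
      (by simpa [← even_iff_two_dvd] using hu) d
    rw [← orderOf_units, Units.val_pow_eq_pow_val, ← ha, mul_comm 4 q, pow_mul, Nat.add_sub_cancel,
      ← key]
    congr 1
    exact_mod_cast congrArg (Int.cast : ℤ → ZMod (2 ^ (d + n))) hau
  have hord : 4 * q ∣ orderOf x := hx ▸ orderOf_map_dvd _ x
  rw [orderOf_pow_of_dvd (by omega) hord] at hxu
  rw [← hxu, Nat.mul_div_cancel' hord]

/-- For `3 ≤ n ≤ m` and a cyclic subgroup `B` of `(ℤ/2^nℤ)ˣ` of order at least `4`,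
the preimage of `B` under the natural projection `(ℤ/2^mℤ)ˣ → (ℤ/2^nℤ)ˣ` is cyclic. -/
theorem preimage_cyclic_two_adic (n m : ℕ) (hn : 3 ≤ n) (hm : n ≤ m)
    (B : Subgroup ((ZMod (2 ^ n))ˣ)) (hB : IsCyclic B) (hcard : 4 ≤ Nat.card B) :
    IsCyclic (Subgroup.comap
      (Units.map (ZMod.castHom (pow_dvd_pow 2 hm) (ZMod (2 ^ n))).toMonoidHom) B) := by
  have hsurj := ZMod.unitsMap_surjective (pow_dvd_pow 2 hm)
  change IsCyclic (Subgroup.comap (ZMod.unitsMap (pow_dvd_pow 2 hm)) B)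
  have hcardU (k : ℕ) (hk : 0 < k) : Nat.card (ZMod (2 ^ k))ˣ = 2 ^ (k - 1) := by
    rw [Nat.card_eq_fintype_card, ZMod.card_units_eq_totient,
      Nat.totient_prime_pow Nat.prime_two hk]
    simp
  have hBdvd : Nat.card B ∣ 2 ^ (n - 1) := hcardU n (by omega) ▸ B.card_subgroup_dvd_card
  obtain ⟨q, hq⟩ : 4 ∣ Nat.card B := by
    obtain ⟨r, -, hr⟩ := (Nat.dvd_prime_pow Nat.prime_two).mp hBdvd
    rw [hr] at hcard ⊢
    exact pow_dvd_pow 2 ((Nat.pow_le_pow_iff_right (a := 2) (n := 2) (by norm_num)).mp hcard)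
  obtain ⟨g, hg⟩ := IsCyclic.exists_ofOrder_eq_natCard (α := B)
  obtain ⟨x, hx⟩ := hsurj g
  have hxord := orderOf_lift_two_pow (q := q) (by omega) hm (by omega) x
    (by rw [hx, Subgroup.orderOf_coe, hg, hq])
  -- The preimage and `B` have the same index.
  have hcardH : Nat.card (Subgroup.comap (ZMod.unitsMap (pow_dvd_pow 2 hm)) B)
      = Nat.card B * 2 ^ (m - n) := by
    have h1 := (Subgroup.comap (ZMod.unitsMap (pow_dvd_pow 2 hm)) B).card_mul_index
    have h2 := B.card_mul_index
    rw [Subgroup.index_comap_of_surjective B hsurj, hcardU m (by omega)] at h1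
    rw [hcardU n (by omega)] at h2
    refine Nat.eq_of_mul_eq_mul_right (Nat.pos_of_ne_zero B.index_ne_zero_of_finite) ?_
    rw [h1, mul_right_comm, h2, ← pow_add]
    congr 1
    omega
  refine isCyclic_of_orderOf_eq_card ⟨x, by simp [Subgroup.mem_comap, hx]⟩ ?_
  rw [Subgroup.orderOf_mk, hxord, hcardH, hq]
end

section
/- Let p be an odd prime number. For any two sets X, Y ∈ 𝒳_p, the inclusion X ⊆ Y holds if and only if i(Y) divides i(X). -/
/-!
The members of `𝒳_p` are the traces on `ℕ` of open subgroups of `ℤ_pˣ`, which is procyclic for odd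
`p`; hence each is determined by its index, and inclusion corresponds to divisibility of indices.
The argument runs at finite levels `ℤ/p^nℤ`.

* A number `x` lies in the closure of `a^ℕ` iff `p ∤ x` and `x` is congruent to a positive power of
  `a` modulo every `p^n` (`mem_clPow_iff`). So `π_n(X)` is the cyclic subgroup generated by `a`
  (`pin_clPow`).
* Let `k` be the `p`-adic valuation of `a^(p-1) - 1`, which is nonzero as `a > 1`. Lifting the
  exponent shows that `p^(m-k)` divides the order of `a` modulo `p^m` for `m ≥ k`
  (`pow_dvd_orderOf`). As `(ℤ/p^mℤ)ˣ` is cyclic, its subgroup generated by `a` contains every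
  element whose order divides the order of `a` (`mem_zpowers_of_pow_orderOf`); it follows that
  `X` is a union of residue classes modulo `p^(k+1)` (`saturated_succ`), so `n(X)` is the minimum
  of a nonempty set (`nX_spec`).
* If `X` is a union of classes modulo `p^n` and `n ≤ m`, then `π_m(X)` is the full preimage of
  `π_n(X)`, so the two subgroups have the same index. Thus `i(X)` may be computed at any level
  `m ≥ n(X)` (`iX_eq`), and `i(X)`, `i(Y)` can be compared inside one cyclic group.
-/

open TopologicalSpace

/-! ### Cyclic groups -/

lemma mem_zpowers_of_pow_orderOf {G : Type*} [Group G] [Finite G] [IsCyclic G] (u x : G)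
    (h : x ^ orderOf u = 1) : x ∈ Subgroup.zpowers u := by
  classical
  have := Fintype.ofFinite G
  -- The subgroup `zpowers u` already exhausts the at most `orderOf u` solutions of the equation.
  have hsub : (Finset.univ.filter fun g : G => g ∈ Subgroup.zpowers u) ⊆
      Finset.univ.filter fun g : G => g ^ orderOf u = 1 := by
    intro g hg
    simp only [Finset.mem_filter, Finset.mem_univ, true_and] at hg ⊢
    obtain ⟨k, rfl⟩ := Subgroup.mem_zpowers_iff.1 hg
    rw [← zpow_natCast, ← zpow_mul, mul_comm, zpow_mul, zpow_natCast, pow_orderOf_eq_one, one_zpow]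
  have hcard : (Finset.univ.filter fun g : G => g ∈ Subgroup.zpowers u).card = orderOf u := by
    rw [← Nat.card_zpowers, Nat.card_eq_fintype_card, Fintype.card_subtype]
  have heq := Finset.eq_of_subset_of_card_le hsub
    ((IsCyclic.card_pow_eq_one_le (orderOf_pos u)).trans hcard.ge)
  have hx : x ∈ Finset.univ.filter fun g : G => g ^ orderOf u = 1 := by simpa using h
  rw [← heq] at hx
  simpa using hx

lemma zpowers_le_iff_index_dvd {G : Type*} [Group G] [Finite G] [IsCyclic G] (u v : G) :
    Subgroup.zpowers u ≤ Subgroup.zpowers v ↔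
      (Subgroup.zpowers v).index ∣ (Subgroup.zpowers u).index := by
  refine ⟨Subgroup.index_dvd_of_le, fun ⟨c, hc⟩ => ?_⟩
  rw [Subgroup.zpowers_le]
  apply mem_zpowers_of_pow_orderOf
  rw [← orderOf_dvd_iff_pow_eq_one]
  have h1 := Subgroup.card_mul_index (Subgroup.zpowers u)
  have h2 := Subgroup.card_mul_index (Subgroup.zpowers v)
  rw [Nat.card_zpowers] at h1 h2
  have hpos : 0 < (Subgroup.zpowers v).index :=
    Nat.pos_of_ne_zero Subgroup.index_ne_zero_of_finite
  refine ⟨c, Nat.eq_of_mul_eq_mul_right hpos ?_⟩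
  rw [h2, ← h1, hc]
  ring

/-! ### The closure of the powers of `a` -/

/-- Elements far enough out in a residue class lie in a given neighbourhood. Only numbers `y ≥ x`
are covered, because the basic open sets are one-sided progressions. -/
lemma padic_nhd (p : ℕ) (U : Set (Np p)) (hU : @IsOpen _ (padicTop p) U) (x : Np p) (hx : x ∈ U) :
    ∃ n : ℕ, ∀ y : Np p, (x : ℕ+) ≤ y → ((x : ℕ+) : ℕ) ≡ ((y : ℕ+) : ℕ) [MOD p ^ n] → y ∈ U := by
  change GenerateOpen _ U at hU
  induction hU with
  | basic s hs =>
    obtain ⟨x0, n, -, -, rfl⟩ := hs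
    obtain ⟨k, hk⟩ := hx
    refine ⟨n, fun y hxy hmod => ?_⟩
    have hxy' : ((x : ℕ+) : ℕ) ≤ ((y : ℕ+) : ℕ) := by exact_mod_cast hxy
    obtain ⟨j, hj⟩ := (Nat.modEq_iff_dvd' hxy').1 hmod
    refine ⟨k + j, ?_⟩
    rw [mul_add]
    omega
  | univ => exact ⟨0, fun _ _ _ => trivial⟩
  | inter s t _ _ ihs iht =>
    obtain ⟨n, hn⟩ := ihs hx.1
    obtain ⟨m, hm⟩ := iht hx.2
    exact ⟨max n m, fun y hxy hmod =>
      ⟨hn y hxy (hmod.of_dvd (pow_dvd_pow p (le_max_left n m))),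
        hm y hxy (hmod.of_dvd (pow_dvd_pow p (le_max_right n m)))⟩⟩
  | sUnion S _ ih =>
    obtain ⟨s, hs, hxs⟩ := hx
    obtain ⟨n, hn⟩ := ih s hs hxs
    exact ⟨n, fun y hxy hmod => ⟨s, hs, hn y hxy hmod⟩⟩

lemma coprime_pow_of_not_dvd {p a : ℕ} (hp : p.Prime) (hpa : ¬ p ∣ a) (n : ℕ) :
    a.Coprime (p ^ n) :=
  (((Nat.Prime.coprime_iff_not_dvd hp).2 hpa).pow_left n).symm

lemma mem_clPow_iff {p a : ℕ} (hp : p.Prime) (ha : 1 < a) (hpa : ¬ p ∣ a) (x : ℕ+) :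
    x ∈ clPow p a ↔ ¬ p ∣ (x : ℕ) ∧ ∀ n, ∃ k, 0 < k ∧ (x : ℕ) ≡ a ^ k [MOD p ^ n] := by
  unfold clPow padicClosure
  constructor
  · rintro ⟨x, hx, rfl⟩
    refine ⟨x.2, fun n => ?_⟩
    rw [@mem_closure_iff _ (padicTop p)] at hx
    -- The topology only provides the moduli `p ^ n` with `n > 0`, whence the exponent `n + 1`.
    obtain ⟨y, ⟨j, hj⟩, k, hk, hy⟩ := hx
      {y : Np p | ∃ k : ℕ, ((y : ℕ+) : ℕ) = ((x : ℕ+) : ℕ) + p ^ (n + 1) * k}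
      (GenerateOpen.basic _ ⟨_, n + 1, x.1.pos, n.succ_pos, rfl⟩) ⟨0, by simp⟩
    refine ⟨k, hk, ?_⟩
    rw [← hy, hj, pow_succ, mul_assoc]
    exact (Nat.modEq_iff_dvd' (Nat.le_add_right _ _)).2 ⟨p * j, by simp⟩
  · rintro ⟨hpx, h⟩
    refine ⟨⟨x, hpx⟩, ?_, rfl⟩
    rw [@mem_closure_iff _ (padicTop p)]
    intro U hU hxU
    obtain ⟨n, hn⟩ := padic_nhd p U hU _ hxU
    obtain ⟨k, hk, hmod⟩ := h n
    -- Adding a multiple of `φ (p ^ n)` to the exponent makes the power at least `x`.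
    have hφ : 0 < (p ^ n).totient := Nat.totient_pos.2 (pow_pos hp.pos n)
    have hmod' : (x : ℕ) ≡ a ^ (k + (p ^ n).totient * x) [MOD p ^ n] := by
      have h1 := (Nat.ModEq.pow_totient (coprime_pow_of_not_dvd hp hpa n)).pow (x : ℕ)
      have h2 := (hmod.mul h1.symm)
      rwa [one_pow, mul_one, ← pow_mul, ← pow_add] at h2
    have hle : (x : ℕ) ≤ a ^ (k + (p ^ n).totient * x) := by
      refine (Nat.lt_pow_self ha).le.trans (Nat.pow_le_pow_right (by omega) ?_)
      nlinarith
    have hnd : ¬ p ∣ a ^ (k + (p ^ n).totient * x) := fun hd => hpa (hp.dvd_of_dvd_pow hd)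
    refine ⟨⟨⟨a ^ (k + (p ^ n).totient * x), pow_pos (by omega) _⟩, hnd⟩, hn _ ?_ hmod', ?_⟩
    · exact hle
    · exact ⟨_, Nat.add_pos_left hk _, rfl⟩

/-! ### Projections as cyclic subgroups -/

/-- The class of `a` as a unit of `ℤ/p^nℤ`, where `p ∤ a`. -/
def unitOf {p a : ℕ} (hp : p.Prime) (hpa : ¬ p ∣ a) (n : ℕ) : (ZMod (p ^ n))ˣ :=
  ZMod.unitOfCoprime a (coprime_pow_of_not_dvd hp hpa n)

lemma val_unitOf {p a : ℕ} (hp : p.Prime) (hpa : ¬ p ∣ a) (n : ℕ) :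
    ((unitOf hp hpa n : (ZMod (p ^ n))ˣ) : ZMod (p ^ n)) = a := rfl

lemma neZero_pow {p : ℕ} (hp : p.Prime) (n : ℕ) : NeZero (p ^ n) :=
  ⟨(pow_pos hp.pos n).ne'⟩

lemma finite_units {p : ℕ} (hp : p.Prime) (n : ℕ) : Finite (ZMod (p ^ n))ˣ :=
  have := neZero_pow hp n
  inferInstance

lemma mem_zpowers_unitOf_iff {p a : ℕ} (hp : p.Prime) (hpa : ¬ p ∣ a) {x : ℕ} (hpx : ¬ p ∣ x)
    (n : ℕ) : unitOf hp hpx n ∈ Subgroup.zpowers (unitOf hp hpa n) ↔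
      ∃ k, 0 < k ∧ x ≡ a ^ k [MOD p ^ n] := by
  have := finite_units hp n
  constructor
  · intro h
    obtain ⟨k, hk⟩ := mem_powers_iff_mem_zpowers.2 h
    -- Shifting the exponent by the order makes it positive.
    refine ⟨k + orderOf (unitOf hp hpa n), Nat.add_pos_right _ (orderOf_pos _), ?_⟩
    rw [← ZMod.natCast_eq_natCast_iff]
    have h2 : unitOf hp hpx n = unitOf hp hpa n ^ (k + orderOf (unitOf hp hpa n)) := by
      rw [pow_add, pow_orderOf_eq_one, mul_one]
      exact hk.symm
    have h3 := congrArg Units.val h2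
    rw [Units.val_pow_eq_pow_val, val_unitOf, val_unitOf] at h3
    rw [h3, Nat.cast_pow]
  · rintro ⟨k, -, h⟩
    rw [← ZMod.natCast_eq_natCast_iff] at h
    have : unitOf hp hpx n = unitOf hp hpa n ^ k := by
      ext
      rw [Units.val_pow_eq_pow_val, val_unitOf, val_unitOf, h, Nat.cast_pow]
    rw [this]
    exact Subgroup.npow_mem_zpowers _ k

lemma pow_mem_clPow {p a : ℕ} (hp : p.Prime) (ha : 1 < a) (hpa : ¬ p ∣ a) {k : ℕ} (hk : 0 < k) :
    (⟨a ^ k, pow_pos (by omega) k⟩ : ℕ+) ∈ clPow p a :=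
  (mem_clPow_iff hp ha hpa _).2
    ⟨fun hd => hpa (hp.dvd_of_dvd_pow hd), fun _ => ⟨k, hk, Nat.ModEq.refl _⟩⟩

lemma pin_clPow {p a : ℕ} (hp : p.Prime) (ha : 1 < a) (hpa : ¬ p ∣ a) (n : ℕ) :
    pin p n (clPow p a) =
      Units.val '' (Subgroup.zpowers (unitOf hp hpa n) : Set (ZMod (p ^ n))ˣ) := by
  have := finite_units hp n
  ext z
  constructor
  · rintro ⟨x, hx, rfl⟩
    obtain ⟨hpx, h⟩ := (mem_clPow_iff hp ha hpa x).1 hx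
    exact ⟨unitOf hp hpx n, (mem_zpowers_unitOf_iff hp hpa hpx n).2 (h n), rfl⟩
  · rintro ⟨w, hw, rfl⟩
    obtain ⟨k, hk⟩ := mem_powers_iff_mem_zpowers.2 hw
    refine ⟨_, pow_mem_clPow hp ha hpa (k := k + orderOf (unitOf hp hpa n))
      (Nat.add_pos_right _ (orderOf_pos _)), ?_⟩
    have h2 : w = unitOf hp hpa n ^ (k + orderOf (unitOf hp hpa n)) := by
      rw [pow_add, pow_orderOf_eq_one, mul_one]
      exact hk.symm
    rw [h2, Units.val_pow_eq_pow_val, val_unitOf]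
    simp

lemma ncard_pin {p a : ℕ} (hp : p.Prime) (ha : 1 < a) (hpa : ¬ p ∣ a) (n : ℕ) :
    (pin p n (clPow p a)).ncard = orderOf (unitOf hp hpa n) := by
  rw [pin_clPow hp ha hpa, Set.ncard_image_of_injective _ Units.val_injective, ← Nat.card_zpowers]
  rfl

/-- `X` is a union of residue classes modulo `p^n` within the positive integers. -/
def Saturated (p n : ℕ) (X : Set ℕ+) : Prop :=
  X = {y : ℕ+ | ((y : ℕ) : ZMod (p ^ n)) ∈ pin p n X}

lemma saturated_iff {p n : ℕ} {X : Set ℕ+} :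
    Saturated p n X ↔ ∀ x : ℕ+, ((x : ℕ) : ZMod (p ^ n)) ∈ pin p n X → x ∈ X := by
  refine ⟨fun h x hx => by rw [h]; exact hx, fun h => ?_⟩
  exact Set.Subset.antisymm (fun x hx => ⟨x, hx, rfl⟩) h

/-! ### Existence of a saturated level -/

lemma pow_dvd_orderOf {p a : ℕ} (hp : p.Prime) (hodd : p ≠ 2) (ha : 1 < a) (hpa : ¬ p ∣ a) :
    ∃ k, ∀ j, p ^ j ∣ orderOf (unitOf hp hpa (k + j)) := by
  have := Fact.mk hp
  have hodd' : Odd p := hp.odd_of_ne_two hodd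
  have h1 : 1 < a ^ (p - 1) := Nat.one_lt_pow (by have := hp.two_le; omega) ha
  have hfermat : p ∣ a ^ (p - 1) - 1 := by
    have h := Nat.ModEq.pow_totient (((Nat.Prime.coprime_iff_not_dvd hp).2 hpa).symm)
    rw [Nat.totient_prime hp] at h
    exact (Nat.modEq_iff_dvd' h1.le).1 h.symm
  have hnd : ¬ p ∣ a ^ (p - 1) := fun hd => hpa (hp.dvd_of_dvd_pow hd)
  refine ⟨padicValNat p (a ^ (p - 1) - 1), fun j => ?_⟩
  have hfin := finite_units hp (padicValNat p (a ^ (p - 1) - 1) + j)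
  set k := padicValNat p (a ^ (p - 1) - 1)
  set t := orderOf (unitOf hp hpa (k + j)) with ht
  have ht0 : t ≠ 0 := (orderOf_pos _).ne'
  have hat : a ^ t ≡ 1 [MOD p ^ (k + j)] := by
    rw [← ZMod.natCast_eq_natCast_iff]
    have h := congrArg Units.val (pow_orderOf_eq_one (unitOf hp hpa (k + j)))
    rw [Units.val_pow_eq_pow_val, val_unitOf] at h
    push_cast
    exact h
  have hbt : p ^ (k + j) ∣ (a ^ (p - 1)) ^ t - 1 ^ t := by
    have h := hat.pow (p - 1)
    rw [one_pow, ← pow_mul, mul_comm, pow_mul] at h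
    rw [one_pow]
    exact (Nat.modEq_iff_dvd' (Nat.one_le_pow _ _ (by omega))).1 h.symm
  have hne : (a ^ (p - 1)) ^ t - 1 ^ t ≠ 0 := by
    have := Nat.one_lt_pow ht0 h1
    rw [one_pow]
    omega
  have hval := (padicValNat_dvd_iff_le hne).1 hbt
  rw [padicValNat.pow_sub_pow hodd' h1 hfermat hnd ht0] at hval
  exact (padicValNat_dvd_iff_le ht0).2 (by omega)

lemma modEq_pow_prime_pow {p : ℕ} (hp : p.Prime) (hodd : p ≠ 2) {x y n : ℕ} (hpx : ¬ p ∣ x)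
    (hn : 0 < n) (h : x ≡ y [MOD p ^ n]) (j : ℕ) : x ^ p ^ j ≡ y ^ p ^ j [MOD p ^ (n + j)] := by
  have h1 : (p : ℤ) ^ n ∣ (x : ℤ) - y := by
    have := (Nat.modEq_iff_dvd.1 h.symm)
    exact_mod_cast this
  have h2 : (p : ℤ) ∣ (x : ℤ) - y := (dvd_pow_self _ hn.ne').trans h1
  have h3 := Int.emultiplicity_pow_sub_pow hp (hp.odd_of_ne_two hodd) h2
    (by exact_mod_cast hpx) (p ^ j)
  have h4 : (p : ℤ) ^ (n + j) ∣ (x : ℤ) ^ p ^ j - (y : ℤ) ^ p ^ j := by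
    rw [pow_dvd_iff_le_emultiplicity, h3, Nat.cast_add]
    exact add_le_add (pow_dvd_iff_le_emultiplicity.1 h1)
      (pow_dvd_iff_le_emultiplicity.1 dvd_rfl)
  refine (Nat.modEq_iff_dvd.2 ?_).symm
  push_cast
  exact h4

lemma not_dvd_of_modEq_pow {p a x n k : ℕ} (hp : p.Prime) (hpa : ¬ p ∣ a) (hn : 0 < n)
    (h : x ≡ a ^ k [MOD p ^ n]) : ¬ p ∣ x := fun hd =>
  hpa (hp.dvd_of_dvd_pow (((h.of_dvd (dvd_pow_self p hn.ne')).dvd_iff dvd_rfl).1 hd))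

/-- Membership of `x` in `π_n(X)` means that `x` is congruent to a positive power of `a`. -/
lemma cast_mem_pin_iff {p a : ℕ} (hp : p.Prime) (ha : 1 < a) (hpa : ¬ p ∣ a) {n : ℕ} (x : ℕ) :
    (x : ZMod (p ^ n)) ∈ pin p n (clPow p a) ↔ ∃ k, 0 < k ∧ x ≡ a ^ k [MOD p ^ n] := by
  constructor
  · rintro ⟨y, hy, hyx⟩
    obtain ⟨k, hk, h⟩ := ((mem_clPow_iff hp ha hpa y).1 hy).2 n
    exact ⟨k, hk, ((ZMod.natCast_eq_natCast_iff _ _ _).1 hyx).symm.trans h⟩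
  · rintro ⟨k, hk, h⟩
    exact ⟨_, pow_mem_clPow hp ha hpa hk, ((ZMod.natCast_eq_natCast_iff _ _ _).2 h).symm⟩

lemma saturated_succ {p a : ℕ} (hp : p.Prime) (hodd : p ≠ 2) (ha : 1 < a) (hpa : ¬ p ∣ a) {k : ℕ}
    (hk : ∀ j, p ^ j ∣ orderOf (unitOf hp hpa (k + j))) :
    Saturated p (k + 1) (clPow p a) := by
  rw [saturated_iff]
  intro x hx
  obtain ⟨i, hi, hmod⟩ := (cast_mem_pin_iff hp ha hpa _).1 hx
  have hpx := not_dvd_of_modEq_pow hp hpa k.succ_pos hmod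
  refine (mem_clPow_iff hp ha hpa x).2 ⟨hpx, fun m => ?_⟩
  -- It suffices to treat the levels `k + 1 + j`, since these moduli are divisible by `p ^ m`.
  suffices H : ∀ j, ∃ l, 0 < l ∧ (x : ℕ) ≡ a ^ l [MOD p ^ (k + 1 + j)] by
    obtain ⟨l, hl, h⟩ := H m
    exact ⟨l, hl, h.of_dvd (pow_dvd_pow p (by omega))⟩
  intro j
  rw [← mem_zpowers_unitOf_iff hp hpa hpx]
  have := finite_units hp (k + 1 + j)
  have := ZMod.isCyclic_units_of_prime_pow p hp hodd (k + 1 + j)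
  apply mem_zpowers_of_pow_orderOf
  have hd : p ^ j ∣ orderOf (unitOf hp hpa (k + 1 + j)) := by
    rw [add_assoc]
    exact (pow_dvd_pow p (by omega)).trans (hk (1 + j))
  obtain ⟨c, hc⟩ := hd
  have hpow : unitOf hp hpx (k + 1 + j) ^ p ^ j = (unitOf hp hpa (k + 1 + j) ^ i) ^ p ^ j := by
    ext
    have h := modEq_pow_prime_pow hp hodd hpx k.succ_pos hmod j
    rw [← ZMod.natCast_eq_natCast_iff] at h
    push_cast [val_unitOf]
    push_cast at h
    exact h
  rw [hc, pow_mul, hpow, ← pow_mul, ← pow_mul, ← hc, mul_comm, pow_mul,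
    pow_orderOf_eq_one, one_pow]

lemma nX_spec {p a : ℕ} (hp : p.Prime) (hodd : p ≠ 2) (ha : 1 < a) (hpa : ¬ p ∣ a) :
    0 < nX p (clPow p a) ∧ Saturated p (nX p (clPow p a)) (clPow p a) := by
  obtain ⟨k, hk⟩ := pow_dvd_orderOf hp hodd ha hpa
  have hne : {n : ℕ | 0 < n ∧
      clPow p a = {y : ℕ+ | ((y : ℕ) : ZMod (p ^ n)) ∈ pin p n (clPow p a)} ∧
      max p 3 ≤ (pin p n (clPow p a)).ncard}.Nonempty := by
    refine ⟨k + 1, k.succ_pos, saturated_succ hp hodd ha hpa hk, ?_⟩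
    have h3 : 3 ≤ p := by have := hp.two_le; omega
    rw [ncard_pin hp ha hpa, max_eq_left h3]
    have := finite_units hp (k + 1)
    exact Nat.le_of_dvd (orderOf_pos _) (by simpa using hk 1)
  have h := Nat.sInf_mem hne
  exact ⟨h.1, h.2.1⟩

/-! ### Independence of the index from the level -/

lemma saturated_mono {p a n m : ℕ} (hp : p.Prime) (ha : 1 < a) (hpa : ¬ p ∣ a) (hnm : n ≤ m)
    (h : Saturated p n (clPow p a)) : Saturated p m (clPow p a) := by
  rw [saturated_iff] at h ⊢
  intro x hx
  obtain ⟨k, hk, hmod⟩ := (cast_mem_pin_iff hp ha hpa _).1 hx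
  exact h x ((cast_mem_pin_iff hp ha hpa _).2 ⟨k, hk, hmod.of_dvd (pow_dvd_pow p hnm)⟩)

lemma index_eq_of_saturated {p a n m : ℕ} (hp : p.Prime) (ha : 1 < a) (hpa : ¬ p ∣ a)
    (hn : 0 < n) (hnm : n ≤ m) (h : Saturated p n (clPow p a)) :
    (Subgroup.zpowers (unitOf hp hpa n)).index = (Subgroup.zpowers (unitOf hp hpa m)).index := by
  have := neZero_pow hp m
  have hd : p ^ n ∣ p ^ m := pow_dvd_pow p hnm
  rw [← Subgroup.index_comap_of_surjective _ (ZMod.unitsMap_surjective hd)]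
  congr 1
  have hmap : ∀ {x : ℕ} (hpx : ¬ p ∣ x), ZMod.unitsMap hd (unitOf hp hpx m) = unitOf hp hpx n := by
    intro x hpx
    ext
    rw [ZMod.unitsMap_val, val_unitOf, val_unitOf, ZMod.cast_natCast hd]
  ext w
  rw [Subgroup.mem_comap]
  -- A positive representative of `w`; adding the modulus excludes zero.
  obtain ⟨x, hx0, hx⟩ : ∃ x : ℕ, 0 < x ∧ (x : ZMod (p ^ m)) = w :=
    ⟨(w : ZMod (p ^ m)).val + p ^ m, Nat.add_pos_right _ (pow_pos hp.pos m), by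
      rw [Nat.cast_add, ZMod.natCast_self, add_zero, ZMod.natCast_zmod_val]⟩
  have hpx : ¬ p ∣ x := by
    intro hpx
    have hc : x.Coprime (p ^ m) := by
      rw [← ZMod.isUnit_iff_coprime, hx]
      exact w.isUnit
    exact Nat.not_coprime_of_dvd_of_dvd hp.one_lt hpx (dvd_pow_self p (by omega)) hc
  obtain rfl : unitOf hp hpx m = w := by
    ext
    exact hx
  rw [hmap, mem_zpowers_unitOf_iff, mem_zpowers_unitOf_iff]
  constructor
  · intro hk
    have hmem := saturated_iff.1 h ⟨x, hx0⟩ ((cast_mem_pin_iff hp ha hpa x).2 hk)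
    exact ((mem_clPow_iff hp ha hpa _).1 hmem).2 m
  · rintro ⟨k, hk, hmod⟩
    exact ⟨k, hk, hmod.of_dvd hd⟩

lemma iX_eq {p a m : ℕ} (hp : p.Prime) (hodd : p ≠ 2) (ha : 1 < a) (hpa : ¬ p ∣ a)
    (hm : nX p (clPow p a) ≤ m) :
    iX p (clPow p a) = (Subgroup.zpowers (unitOf hp hpa m)).index := by
  obtain ⟨h0, hs⟩ := nX_spec hp hodd ha hpa
  rw [← index_eq_of_saturated hp ha hpa h0 hm hs]
  unfold iX
  have := finite_units hp (nX p (clPow p a))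
  rw [ncard_pin hp ha hpa,
    ← Subgroup.card_mul_index (Subgroup.zpowers (unitOf hp hpa (nX p (clPow p a)))),
    Nat.card_zpowers]
  exact Nat.mul_div_cancel_left _ (orderOf_pos _)

lemma subset_iff_zpowers_le {p a b m : ℕ} (hp : p.Prime) (ha : 1 < a) (hpa : ¬ p ∣ a)
    (hb : 1 < b) (hpb : ¬ p ∣ b) (h : Saturated p m (clPow p b)) :
    clPow p a ⊆ clPow p b ↔
      Subgroup.zpowers (unitOf hp hpa m) ≤ Subgroup.zpowers (unitOf hp hpb m) := by
  have hpin : Subgroup.zpowers (unitOf hp hpa m) ≤ Subgroup.zpowers (unitOf hp hpb m) ↔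
      pin p m (clPow p a) ⊆ pin p m (clPow p b) := by
    rw [pin_clPow hp ha hpa, pin_clPow hp hb hpb, Set.image_subset_image_iff Units.val_injective]
    rfl
  rw [hpin]
  refine ⟨fun hab => Set.image_mono hab, fun hab x hx => ?_⟩
  exact saturated_iff.1 h x (hab ⟨x, hx, rfl⟩)

/-- For an odd prime `p` and `X, Y ∈ 𝒳_p`, `X ⊆ Y` holds iff `i(Y)` divides `i(X)`. -/
theorem XX_subset_iff_index_dvd (p : ℕ) (hp : p.Prime) (hodd : p ≠ 2)
    (X Y : Set ℕ+) (hX : X ∈ XX p) (hY : Y ∈ XX p) :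
    X ⊆ Y ↔ iX p Y ∣ iX p X := by
  obtain ⟨a, ha0, ha1, hpa, rfl⟩ := hX
  obtain ⟨b, hb0, hb1, hpb, rfl⟩ := hY
  have ha : 1 < a := by omega
  have hb : 1 < b := by omega
  have hxm := le_max_left (nX p (clPow p a)) (nX p (clPow p b))
  have hym := le_max_right (nX p (clPow p a)) (nX p (clPow p b))
  have hs := saturated_mono hp hb hpb hym (nX_spec hp hodd hb hpb).2
  rw [iX_eq hp hodd ha hpa hxm, iX_eq hp hodd hb hpb hym,
    subset_iff_zpowers_le hp ha hpa hb hpb hs]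
  have := finite_units hp (max (nX p (clPow p a)) (nX p (clPow p b)))
  have := ZMod.isCyclic_units_of_prime_pow p hp hodd (max (nX p (clPow p a)) (nX p (clPow p b)))
  exact zpowers_le_iff_index_dvd _ _
end

section
/- Let p be an odd prime number, n ∈ ℕ, and a = 1+p^n. Then the closure of a^ℕ in the p-adic topology on ℕ \ pℕ equals 1+p^nℕ₀, and i(cl(a^ℕ)) = p^{n-1}(p-1). -/
/-!
Write `a = 1 + p ^ n`. Modulo `p ^ (d + n)` the classes congruent to `1` modulo `p ^ n` are the
`p ^ d` classes of `1 + p ^ n * j`, `j < p ^ d` (`card_oneClasses`). As `p` is odd, `a` has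
multiplicative order exactly `p ^ d` modulo `p ^ (d + n)`, so its powers, all of which lie among
these classes, exhaust them (`exists_pow_eq`). Exponents may be enlarged by multiples of `p ^ d`,
so every `y ≡ 1` modulo `p ^ n` is approximated by arbitrarily large powers of `a`. Since a
neighbourhood of `y` in the `p`-adic topology contains some `y + p ^ N ℕ₀`
(`exists_progression_subset`), this shows that the closure contains `1 + p ^ n ℕ₀`; the converse
holds because a point outside this progression has the neighbourhood `y + p ^ n ℕ₀`, which is
disjoint from it.

For the index, `n(X) = n + 1` when `X = 1 + p ^ n ℕ₀`: for `m < n` the set `X` is not saturated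
modulo `p ^ m`, for `m = n` its projection is a single class, and for `m = n + 1` it has exactly
`p ≥ 3` classes. Hence `i(X) = p ^ n (p - 1) / p`.
-/

open TopologicalSpace

/-- The residue classes modulo `p ^ (d + n)` that are congruent to `1` modulo `p ^ n`. -/
def oneClasses (p n d : ℕ) : Finset (ZMod (p ^ (d + n))) :=
  (Finset.range (p ^ d)).image fun j => ((1 + p ^ n * j : ℕ) : ZMod (p ^ (d + n)))

lemma card_oneClasses {p : ℕ} (hp : p.Prime) (n d : ℕ) :
    (oneClasses p n d).card = p ^ d := by
  rw [oneClasses, Finset.card_image_of_injOn, Finset.card_range]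
  intro i hi j hj hij
  simp only [Finset.coe_range, Set.mem_Iio] at hi hj
  have h := (ZMod.natCast_eq_natCast_iff _ _ _).1 hij
  have h2 : p ^ n * i ≡ p ^ n * j [MOD p ^ n * p ^ d] := by
    rw [← pow_add, add_comm n d]
    exact Nat.ModEq.add_left_cancel' 1 h
  exact (Nat.ModEq.mul_left_cancel' (pow_pos hp.pos n).ne' h2).eq_of_lt_of_lt hi hj

lemma natCast_mem_oneClasses {p : ℕ} (hp : p.Prime) (n d k : ℕ) :
    ((1 + p ^ n * k : ℕ) : ZMod (p ^ (d + n))) ∈ oneClasses p n d := by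
  refine Finset.mem_image.2 ⟨k % p ^ d, Finset.mem_range.2 (Nat.mod_lt _ (pow_pos hp.pos d)), ?_⟩
  refine (ZMod.natCast_eq_natCast_iff _ _ _).2 (Nat.ModEq.add_left 1 ?_)
  rw [add_comm d n, pow_add]
  exact (Nat.mod_modEq k (p ^ d)).mul_left' _

lemma exists_one_add_pow_pow (p n k : ℕ) : ∃ j, (1 + p ^ n) ^ k = 1 + p ^ n * j := by
  induction k with
  | zero => exact ⟨0, by simp⟩
  | succ k ih =>
    obtain ⟨j, hj⟩ := ih
    exact ⟨j + 1 + p ^ n * j, by rw [pow_succ, hj]; ring⟩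

lemma orderOf_one_add_pow {p : ℕ} (hp : p.Prime) (hodd : p ≠ 2) {n : ℕ} (hn : 0 < n) (d : ℕ) :
    orderOf (((1 + p ^ n : ℕ)) : ZMod (p ^ (d + n))) = p ^ d := by
  have h3 : 3 ≤ p := by have := hp.two_le; omega
  have h := ZMod.orderOf_one_add_mul_prime_pow hp n hn.ne' (by nlinarith) 1
    (by
      intro h
      have := Int.eq_one_of_dvd_one (by positivity) h
      omega) d
  simpa using h

/-- The powers of `1 + p ^ n` exhaust the classes congruent to `1` modulo `p ^ n`: both sets have
`p ^ d` elements. The exponent can be taken larger than any prescribed bound. -/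
lemma exists_pow_eq {p : ℕ} (hp : p.Prime) (hodd : p ≠ 2) {n : ℕ} (hn : 0 < n) (d k B : ℕ) :
    ∃ e, B ≤ e ∧ (((1 + p ^ n : ℕ)) : ZMod (p ^ (d + n))) ^ e = ((1 + p ^ n * k : ℕ)) := by
  set a : ZMod (p ^ (d + n)) := ((1 + p ^ n : ℕ) : ZMod (p ^ (d + n))) with ha
  have hord : orderOf a = p ^ d := orderOf_one_add_pow hp hodd hn d
  have hsub : (Finset.range (p ^ d)).image (fun e => a ^ e) ⊆ oneClasses p n d := by
    intro x hx
    obtain ⟨e, -, rfl⟩ := Finset.mem_image.1 hx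
    obtain ⟨j, hj⟩ := exists_one_add_pow_pow p n e
    have : a ^ e = ((1 + p ^ n * j : ℕ)) := by rw [ha, ← hj, Nat.cast_pow]
    rw [this]
    exact natCast_mem_oneClasses hp n d j
  have hcard : ((Finset.range (p ^ d)).image (fun e => a ^ e)).card = p ^ d := by
    rw [Finset.card_image_of_injOn, Finset.card_range]
    rw [Finset.coe_range, ← hord]
    exact pow_injOn_Iio_orderOf
  have heq := Finset.eq_of_subset_of_card_le hsub (by rw [hcard, card_oneClasses hp])
  have hk := natCast_mem_oneClasses hp n d k
  rw [← heq] at hk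
  obtain ⟨e, -, he⟩ := Finset.mem_image.1 hk
  refine ⟨e + p ^ d * B, ?_, ?_⟩
  · have := Nat.le_mul_of_pos_left B (pow_pos hp.pos d)
    omega
  · have h1 : a ^ p ^ d = 1 := orderOf_dvd_iff_pow_eq_one.1 hord.dvd
    rw [pow_add a, pow_mul a, h1, one_pow, mul_one]
    exact he

lemma exists_progression_subset (p : ℕ) (y : Np p) (U : Set (Np p))
    (hU : @IsOpen _ (padicTop p) U) (hy : y ∈ U) :
    ∃ N, ∀ z : Np p, (∃ k, ((z : ℕ+) : ℕ) = (y : ℕ+) + p ^ N * k) → z ∈ U := by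
  induction hU with
  | basic s hs =>
    obtain ⟨x, m, -, -, rfl⟩ := hs
    obtain ⟨j, hj⟩ := hy
    refine ⟨m, ?_⟩
    rintro z ⟨k, hk⟩
    exact ⟨j + k, by rw [hk, hj]; ring⟩
  | univ => exact ⟨0, fun _ _ => trivial⟩
  | inter s t _ _ ihs iht =>
    obtain ⟨N, hN⟩ := ihs hy.1
    obtain ⟨M, hM⟩ := iht hy.2
    refine ⟨N + M, ?_⟩
    rintro z ⟨k, hk⟩
    exact ⟨hN z ⟨p ^ M * k, by rw [hk]; ring⟩, hM z ⟨p ^ N * k, by rw [hk]; ring⟩⟩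
  | sUnion S _ ih =>
    obtain ⟨s, hs, hys⟩ := hy
    obtain ⟨N, hN⟩ := ih s hs hys
    exact ⟨N, fun z hz => ⟨s, hs, hN z hz⟩⟩

lemma not_dvd_one_add {p : ℕ} (hp : p.Prime) {n : ℕ} (hn : 0 < n) (k : ℕ) :
    ¬ p ∣ 1 + p ^ n * k := by
  intro h
  have h2 : p ∣ p ^ n * k := (dvd_pow_self p hn.ne').mul_right k
  exact hp.one_lt.ne' (Nat.dvd_one.1 ((Nat.dvd_add_left h2).1 h))

lemma mem_golombBasic_one_iff (b : ℕ) (y : ℕ+) :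
    y ∈ golombBasic 1 b ↔ (y : ℕ) ≡ 1 [MOD b] := by
  constructor
  · rintro ⟨k, hk⟩
    rw [hk]
    simp [Nat.ModEq]
  · intro h
    obtain ⟨k, hk⟩ := (Nat.modEq_iff_dvd' y.pos).1 h.symm
    exact ⟨k, by have := y.pos; omega⟩

lemma clPow_eq {p : ℕ} (hp : p.Prime) (hodd : p ≠ 2) {n : ℕ} (hn : 0 < n) :
    clPow p (1 + p ^ n) = golombBasic 1 (p ^ n) := by
  ext y
  constructor
  · rintro ⟨y, hy, rfl⟩
    rw [@mem_closure_iff _ (padicTop p)] at hy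
    obtain ⟨z, ⟨k, hk⟩, e, -, he⟩ := hy
      {z : Np p | ∃ k : ℕ, ((z : ℕ+) : ℕ) = (y : ℕ+) + p ^ n * k}
      (GenerateOpen.basic _ ⟨(y : ℕ+), n, y.1.pos, hn, rfl⟩) ⟨0, by simp⟩
    obtain ⟨j, hj⟩ := exists_one_add_pow_pow p n e
    rw [mem_golombBasic_one_iff]
    have h : ((y : ℕ+) : ℕ) + p ^ n * k = 1 + p ^ n * j := by rw [← hk, he, hj]
    have h1 : ((y : ℕ+) : ℕ) + p ^ n * k ≡ (y : ℕ+) [MOD p ^ n] := by simp [Nat.ModEq]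
    have h2 : 1 + p ^ n * j ≡ 1 [MOD p ^ n] := by simp [Nat.ModEq]
    rw [h] at h1
    exact h1.symm.trans h2
  · rintro ⟨k, hk⟩
    refine ⟨⟨y, by rw [hk]; exact not_dvd_one_add hp hn k⟩, ?_, rfl⟩
    rw [@mem_closure_iff _ (padicTop p)]
    intro U hU hyU
    obtain ⟨N, hN⟩ := exists_progression_subset p _ U hU hyU
    obtain ⟨e, hBe, he⟩ := exists_pow_eq hp hodd hn N k y
    have hpow : 0 < (1 + p ^ n) ^ e := by positivity
    -- The exponent is at least `y`, so the power exceeds `y` and lies in `y + p ^ N ℕ₀`.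
    have hle : (y : ℕ) ≤ (1 + p ^ n) ^ e :=
      hBe.trans (Nat.lt_pow_self (by have := pow_pos hp.pos n; omega)).le
    have hmod : (y : ℕ) ≡ (1 + p ^ n) ^ e [MOD p ^ (N + n)] := by
      rw [← ZMod.natCast_eq_natCast_iff, Nat.cast_pow, he, hk]
    obtain ⟨c, hc⟩ := (Nat.modEq_iff_dvd' hle).1 hmod
    obtain ⟨j, hj⟩ := exists_one_add_pow_pow p n e
    refine ⟨⟨⟨(1 + p ^ n) ^ e, hpow⟩, ?_⟩, hN _ ⟨p ^ n * c, ?_⟩, e, ?_, rfl⟩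
    · change ¬ p ∣ (1 + p ^ n) ^ e
      rw [hj]
      exact not_dvd_one_add hp hn j
    · change (1 + p ^ n) ^ e = (y : ℕ) + p ^ N * (p ^ n * c)
      rw [← mul_assoc, ← pow_add]
      omega
    · exact lt_of_lt_of_le y.pos hBe

lemma pin_golombBasic {p : ℕ} (hp : p.Prime) (n d : ℕ) :
    pin p (d + n) (golombBasic 1 (p ^ n)) = oneClasses p n d := by
  ext x
  constructor
  · rintro ⟨y, ⟨k, hk⟩, rfl⟩
    change ((y : ℕ) : ZMod (p ^ (d + n))) ∈ oneClasses p n d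
    rw [hk]
    exact natCast_mem_oneClasses hp n d k
  · intro hx
    obtain ⟨j, -, rfl⟩ := Finset.mem_image.1 (Finset.mem_coe.1 hx)
    exact ⟨⟨1 + p ^ n * j, by positivity⟩, ⟨j, rfl⟩, rfl⟩

lemma ncard_pin_golombBasic {p : ℕ} (hp : p.Prime) (n d : ℕ) :
    (pin p (d + n) (golombBasic 1 (p ^ n))).ncard = p ^ d := by
  rw [pin_golombBasic hp, Set.ncard_coe_finset, card_oneClasses hp]

lemma nX_golombBasic {p : ℕ} (hp : p.Prime) (hodd : p ≠ 2) (n : ℕ) :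
    nX p (golombBasic 1 (p ^ n)) = 1 + n := by
  have h3 : 3 ≤ p := by have := hp.two_le; omega
  refine IsLeast.csInf_eq ⟨⟨by omega, ?_, ?_⟩, ?_⟩
  · ext y
    constructor
    · exact fun hy => ⟨y, hy, rfl⟩
    · rintro ⟨z, hz, hzy⟩
      rw [mem_golombBasic_one_iff] at hz ⊢
      have h := (ZMod.natCast_eq_natCast_iff _ _ _).1 hzy
      exact (h.of_dvd (pow_dvd_pow p (by omega))).symm.trans hz
  · rw [ncard_pin_golombBasic hp, pow_one]
    exact max_le le_rfl h3
  · rintro m ⟨-, hsat, hcard⟩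
    by_contra! hlt
    rcases (show m < n ∨ m = 0 + n by omega) with hm | rfl
    · -- `1 + p ^ m` has the same class as `1` modulo `p ^ m`, but not modulo `p ^ n`.
      have hmem : (⟨1 + p ^ m, by positivity⟩ : ℕ+) ∈ golombBasic 1 (p ^ n) := by
        rw [hsat]
        refine ⟨1, ⟨0, by simp⟩, ?_⟩
        refine (ZMod.natCast_eq_natCast_iff _ _ _).2 ?_
        simp [Nat.ModEq]
      obtain ⟨k, hk⟩ := hmem
      have hk' : p ^ m = p ^ n * k := Nat.add_left_cancel hk
      have hle := (Nat.pow_dvd_pow_iff_le_right hp.one_lt).1 ⟨k, hk'⟩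
      omega
    · rw [ncard_pin_golombBasic hp, pow_zero] at hcard
      have := le_max_left p 3
      omega

/-- For an odd prime `p`, `n ∈ ℕ` and `a = 1 + p^n`, the closure of `a^ℕ` in the
`p`-adic topology on `ℕ \ pℕ` equals `1 + p^nℕ₀`, and `i(cl(a^ℕ)) = p^{n-1}(p-1)`. -/
theorem clPow_one_add_pow (p : ℕ) (hp : p.Prime) (hodd : p ≠ 2) (n : ℕ) (hn : 0 < n) :
    clPow p (1 + p ^ n) = golombBasic 1 (p ^ n) ∧
    iX p (clPow p (1 + p ^ n)) = p ^ (n - 1) * (p - 1) := by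
  refine ⟨clPow_eq hp hodd hn, ?_⟩
  have : NeZero (p ^ (1 + n)) := ⟨(pow_pos hp.pos _).ne'⟩
  rw [clPow_eq hp hodd hn, iX, nX_golombBasic hp hodd, ncard_pin_golombBasic hp,
    Nat.card_eq_fintype_card, ZMod.card_units_eq_totient, Nat.totient_prime_pow hp (by omega),
    pow_one]
  obtain ⟨m, rfl⟩ : ∃ m, n = m + 1 := ⟨n - 1, by omega⟩
  apply Nat.div_eq_of_eq_mul_right hp.pos
  rw [show 1 + (m + 1) - 1 = m + 1 by omega, Nat.add_sub_cancel, pow_succ]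
  ring
end

section
/- Let p be an odd prime number. The family {1+p^nℕ₀ : n ∈ ℕ} coincides with the set of ↑-chain elements of the poset 𝒳_p, i.e., an element t ∈ 𝒳_p satisfies that {X ∈ 𝒳_p : X ⊆ t} is linearly ordered by inclusion if and only if t = 1+p^nℕ₀ for some n ∈ ℕ. Moreover the set of ↑-chain elements is linearly ordered by inclusion. -/
/-!
Membership `y ∈ clPow p a` means that for every `m` some positive power of `a` is congruent to `y`
modulo `p ^ m` (`mem_clPow`). The basic open sets only contain large representatives of a residue
class, but residues of powers of `a > 1` recur along arbitrarily large powers.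

If `a ≡ 1` modulo `p`, write `a = 1 + p ^ n * u` with `p ∤ u`. Since `p` is odd,
`a ^ (p ^ i) = 1 + p ^ (n + i) * w` with `p ∤ w`, and a Hensel-type lifting of the exponent shows
`clPow p a = 1 + p ^ n ℕ₀` (`clPow_eq_golombBasic`). Hence all members of `𝒳_p` contained in some
`1 + p ^ n ℕ₀` are again of this shape, and so form a chain.

If `a ≢ 1` modulo `p`, the closures of the powers of `a ^ (p - 1)` and of `a ^ p` lie in `clPow p a`
and are incomparable: `a ^ p ≡ a ≢ 1` modulo `p`, whereas powers of `a ^ (p - 1)` are `1` modulo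
`p`; and the order of `a` modulo a large power of `p` is divisible by `p`, so that
`a ^ (p - 1) ≡ a ^ (p * k)` would give `p ∣ p - 1`.
-/

open TopologicalSpace

/-- `t ∈ 𝒳_p` is an `↑`-chain element of the poset `𝒳_p` (ordered by reverse inclusion),
i.e. its upper set `{X ∈ 𝒳_p : X ⊆ t}` is a chain. -/
def upChain (p : ℕ) (t : Set ℕ+) : Prop :=
  ∀ X ∈ XX p, ∀ Y ∈ XX p, X ⊆ t → Y ⊆ t → X ⊆ Y ∨ Y ⊆ X

/-! ### Closures of sets of powers -/

/-- Every open set of the `p`-adic topology contains, around each of its points `y`, the trace of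
some `y + p ^ n ℕ₀`. -/
lemma padicTop_open_nhd {p : ℕ} {U : Set (Np p)} (hU : @IsOpen _ (padicTop p) U) :
    ∀ y ∈ U, ∃ n : ℕ, ∀ z : Np p, (y.1 : ℕ) ≤ z.1 → (y.1 : ℕ) ≡ z.1 [MOD p ^ n] → z ∈ U := by
  change GenerateOpen _ U at hU
  induction hU with
  | basic s hs =>
    obtain ⟨x, n, -, -, rfl⟩ := hs
    rintro y ⟨k, hk⟩
    refine ⟨n, fun z hyz hz => ?_⟩
    obtain ⟨c, hc⟩ := (Nat.modEq_iff_dvd' hyz).1 hz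
    refine ⟨k + c, ?_⟩
    rw [mul_add]
    omega
  | univ => exact fun y _ => ⟨0, fun _ _ _ => trivial⟩
  | inter s t _ _ ihs iht =>
    rintro y ⟨hs, ht⟩
    obtain ⟨m, hm⟩ := ihs y hs
    obtain ⟨n, hn⟩ := iht y ht
    refine ⟨m + n, fun z hyz hz => ⟨hm z hyz (hz.of_dvd ?_), hn z hyz (hz.of_dvd ?_)⟩⟩
    · exact pow_dvd_pow _ (by omega)
    · exact pow_dvd_pow _ (by omega)
  | sUnion S _ ih =>
    rintro y ⟨s, hs, hy⟩
    obtain ⟨n, hn⟩ := ih s hs y hy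
    exact ⟨n, fun z hyz hz => ⟨s, hs, hn z hyz hz⟩⟩

lemma mem_clPow {p a : ℕ} (hp : p.Prime) (ha : 1 < a) (hpa : ¬ p ∣ a) (y : ℕ+) :
    y ∈ clPow p a ↔ ∀ n : ℕ, ∃ k : ℕ, 0 < k ∧ (y : ℕ) ≡ a ^ k [MOD p ^ n] := by
  let _ := padicTop p
  constructor
  · rintro ⟨y, hy, rfl⟩ n
    have hopen : IsOpen {z : Np p | ∃ k : ℕ, (z.1 : ℕ) = (y.1 : ℕ) + p ^ (n + 1) * k} :=
      isOpen_generateFrom_of_mem ⟨y.1, n + 1, y.1.pos, by omega, rfl⟩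
    obtain ⟨z, ⟨c, hc⟩, k, hk, hz⟩ := mem_closure_iff.1 hy _ hopen ⟨0, by simp⟩
    refine ⟨k, hk, ?_⟩
    rw [← hz, hc, pow_succ, mul_assoc]
    simp [Nat.ModEq]
  · intro h
    have hpy : ¬ p ∣ (y : ℕ) := by
      obtain ⟨k, hk, hy⟩ := h 1
      rw [pow_one] at hy
      intro hd
      exact hpa (hp.dvd_of_dvd_pow ((hy.dvd_iff dvd_rfl).1 hd))
    refine ⟨⟨y, hpy⟩, mem_closure_iff.2 fun U hU hyU => ?_, rfl⟩
    obtain ⟨n, hn⟩ := padicTop_open_nhd hU _ hyU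
    obtain ⟨k, hk, hy⟩ := h n
    have hcop : Nat.Coprime a (p ^ n) :=
      Nat.Coprime.pow_right _ ((hp.coprime_iff_not_dvd.2 hpa).symm)
    -- adding a multiple of `φ (p ^ n)` to the exponent makes the power exceed `y`
    have hφ : 0 < (p ^ n).totient := Nat.totient_pos.2 (pow_pos hp.pos n)
    let K := k + (p ^ n).totient * y
    have hyK : (y : ℕ) ≡ a ^ K [MOD p ^ n] := by
      have := (Nat.ModEq.pow_totient hcop).pow (y : ℕ)
      have := (Nat.ModEq.refl (a ^ k)).mul this
      rw [one_pow, mul_one, ← pow_mul, ← pow_add] at this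
      exact hy.trans this.symm
    have hle : (y : ℕ) ≤ a ^ K := by
      have h1 : K < a ^ K := Nat.lt_pow_self ha
      have h2 : (y : ℕ) ≤ (p ^ n).totient * y := Nat.le_mul_of_pos_left _ hφ
      have h3 : K = k + (p ^ n).totient * y := rfl
      omega
    refine ⟨⟨⟨a ^ K, by positivity⟩, fun hd => hpa (hp.dvd_of_dvd_pow hd)⟩, hn _ hle hyK, K, ?_, rfl⟩
    exact Nat.add_pos_left hk _

lemma self_mem_clPow {p a : ℕ} (hp : p.Prime) (ha : 1 < a) (hpa : ¬ p ∣ a) :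
    (⟨a, by omega⟩ : ℕ+) ∈ clPow p a :=
  (mem_clPow hp ha hpa _).2 fun _ => ⟨1, one_pos, by rw [pow_one]; rfl⟩

lemma clPow_pow_subset {p a j : ℕ} (hp : p.Prime) (ha : 1 < a) (hpa : ¬ p ∣ a) (hj : 0 < j) :
    clPow p (a ^ j) ⊆ clPow p a := by
  intro y hy
  rw [mem_clPow hp (Nat.one_lt_pow hj.ne' ha) fun h => hpa (hp.dvd_of_dvd_pow h)] at hy
  rw [mem_clPow hp ha hpa]
  intro n
  obtain ⟨k, hk, h⟩ := hy n
  exact ⟨j * k, Nat.mul_pos hj hk, by rwa [pow_mul]⟩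

/-! ### Bases congruent to 1 modulo `p` -/

lemma mem_golombBasic_one {q : ℕ} (y : ℕ+) : y ∈ golombBasic 1 q ↔ 1 ≡ (y : ℕ) [MOD q] := by
  rw [Nat.modEq_iff_dvd' y.pos]
  have := y.pos
  constructor
  · rintro ⟨k, hk⟩
    exact ⟨k, by omega⟩
  · rintro ⟨k, hk⟩
    exact ⟨k, by omega⟩

lemma golombBasic_one_antitone {p m n : ℕ} (h : m ≤ n) :
    golombBasic 1 (p ^ n) ⊆ golombBasic 1 (p ^ m) := by
  intro y hy
  rw [mem_golombBasic_one] at *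
  exact hy.of_dvd (pow_dvd_pow _ h)

/-- Hensel-type lifting of the exponent: an integer that is `1` modulo `p ^ n` is congruent to a
power of `1 + p ^ n * u` modulo every `p ^ (n + i)`, provided `p` is odd and `p ∤ u`. -/
lemma exists_pow_modEq {p n : ℕ} (hp : p.Prime) (hodd : p ≠ 2) (hn : 0 < n) {u y : ℤ}
    (hu : ¬ (p : ℤ) ∣ u) (hy : (p : ℤ) ^ n ∣ y - 1) (i : ℕ) :
    ∃ k : ℕ, 0 < k ∧ (p : ℤ) ^ (n + i) ∣ y - (1 + (p : ℤ) ^ n * u) ^ k := by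
  have hp3 : 3 ≤ p := by have := hp.two_le; omega
  induction i with
  | zero =>
    refine ⟨1, one_pos, ?_⟩
    have : y - (1 + (p : ℤ) ^ n * u) ^ 1 = (y - 1) - (p : ℤ) ^ n * u := by ring
    rw [add_zero, this]
    exact dvd_sub hy (dvd_mul_right _ _)
  | succ i ih =>
    obtain ⟨k, hk, c, hc⟩ := ih
    obtain ⟨v, hv⟩ := ZMod.exists_one_add_mul_pow_prime_pow_eq (R := ℤ) (u := (p : ℤ) ^ n)
      (v := p) hp (dvd_pow_self _ hn.ne') (by
        rw [← pow_succ', ← pow_succ, ← pow_mul]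
        exact pow_dvd_pow _ (by nlinarith)) u i
    set w := u + (p : ℤ) * v with hw
    have hpw : ¬ (p : ℤ) ∣ w := fun h => hu ((dvd_add_left (dvd_mul_right _ _)).1 h)
    have hcop : IsCoprime (p : ℤ) w :=
      (Nat.prime_iff_prime_int.1 hp).irreducible.coprime_iff_not_dvd.2 hpw
    -- `j ≥ 0` solves `j * w ≡ c` modulo `p`
    obtain ⟨j, d, hj⟩ : ∃ (j : ℕ) (d : ℤ), c - j * w = p * d := by
      obtain ⟨r, s, hrs⟩ := hcop
      have hp0 : (p : ℤ) ≠ 0 := by exact_mod_cast hp.ne_zero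
      refine ⟨((c * s) % p).toNat, c * r + (c * s) / p * w, ?_⟩
      rw [Int.toNat_of_nonneg (Int.emod_nonneg _ hp0), Int.emod_def]
      linear_combination (-c) * hrs
    refine ⟨k + p ^ i * j, by omega, ?_⟩
    obtain ⟨e, he⟩ : (p : ℤ) ∣ (1 + (p : ℤ) ^ n * u) ^ k - 1 := by
      have h1 : (1 + (p : ℤ) ^ n * u) - 1 ∣ (1 + (p : ℤ) ^ n * u) ^ k - 1 := sub_one_dvd_pow_sub_one _ _
      refine dvd_trans ?_ h1
      rw [add_sub_cancel_left]
      exact dvd_mul_of_dvd_left (dvd_pow_self _ hn.ne') _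
    obtain ⟨f, hf⟩ := sq_dvd_add_pow_sub_sub ((p : ℤ) ^ (n + i) * w) 1 j
    have hpow : (1 + (p : ℤ) ^ n * u) ^ (p ^ i * j)
        = 1 + j * ((p : ℤ) ^ (n + i) * w) + ((p : ℤ) ^ (n + i) * w) ^ 2 * f := by
      rw [pow_mul, hv]
      simp only [one_pow] at hf
      have : 1 + (p : ℤ) ^ i * p ^ n * w = (p : ℤ) ^ (n + i) * w + 1 := by ring
      rw [this]
      linear_combination hf
    obtain ⟨m, hm⟩ : ∃ m, n = m + 1 := ⟨n - 1, by omega⟩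
    rw [pow_add _ k, hpow]
    refine ⟨d - e * j * w - (1 + (p : ℤ) ^ n * u) ^ k * (p : ℤ) ^ (m + i) * w ^ 2 * f, ?_⟩
    have hq : (p : ℤ) ^ (n + i) = p * (p : ℤ) ^ (m + i) := by rw [hm]; ring
    have hq' : (p : ℤ) ^ (n + (i + 1)) = p * (p : ℤ) ^ (n + i) := by ring
    rw [hq']
    generalize (1 + (p : ℤ) ^ n * u) ^ k = A at *
    generalize (p : ℤ) ^ (n + i) = Q at *
    generalize (p : ℤ) ^ (m + i) = M at *
    linear_combination hc + Q * hj - Q * j * w * he - Q * A * w ^ 2 * f * hq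

lemma clPow_eq_golombBasic {p a : ℕ} (hp : p.Prime) (hodd : p ≠ 2) (ha : 1 < a)
    (h1 : 1 ≡ a [MOD p]) : ∃ n : ℕ, 0 < n ∧ clPow p a = golombBasic 1 (p ^ n) := by
  have hpa : ¬ p ∣ a := fun h => hp.one_lt.ne' (Nat.dvd_one.1 ((h1.dvd_iff dvd_rfl).2 h))
  obtain ⟨n, u, hu, hau⟩ := Nat.exists_eq_pow_mul_and_not_dvd (n := a - 1) (by omega) p hp.ne_one
  have hn : 0 < n := by
    rcases Nat.eq_zero_or_pos n with rfl | h
    · rw [pow_zero, one_mul] at hau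
      exact absurd (hau ▸ (Nat.modEq_iff_dvd' ha.le).1 h1) hu
    · exact h
  have hae : a = 1 + p ^ n * u := by omega
  have hae' : (a : ℤ) = 1 + (p : ℤ) ^ n * u := by rw [hae]; push_cast; ring
  refine ⟨n, hn, Set.ext fun y => ?_⟩
  rw [mem_golombBasic_one, mem_clPow hp ha hpa]
  constructor
  · intro h
    obtain ⟨k, -, hk⟩ := h n
    have : 1 ≡ a [MOD p ^ n] := by
      rw [Nat.modEq_iff_dvd' ha.le, hau]
      exact dvd_mul_right _ _
    have := this.pow k
    rw [one_pow] at this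
    exact this.trans hk.symm
  · intro h i
    obtain ⟨k, hk, hd⟩ := exists_pow_modEq (p := p) (n := n) (u := u) (y := (y : ℕ)) hp hodd hn
      (by exact_mod_cast hu) (by have := h.dvd; push_cast at this; exact this) i
    refine ⟨k, hk, Nat.ModEq.symm ?_⟩
    rw [Nat.modEq_iff_dvd]
    push_cast
    rw [hae']
    exact (pow_dvd_pow _ (by omega)).trans hd

/-! ### Bases not congruent to 1 modulo `p` -/

lemma not_clPow_pow_prime_subset {p a : ℕ} (hp : p.Prime) (ha : 1 < a) (hpa : ¬ p ∣ a)
    (h1 : ¬ 1 ≡ a [MOD p]) : ¬ clPow p (a ^ p) ⊆ clPow p (a ^ (p - 1)) := by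
  have := Fact.mk hp
  intro hsub
  have hnd : ∀ j, ¬ p ∣ a ^ j := fun j h => hpa (hp.dvd_of_dvd_pow h)
  have h := hsub (self_mem_clPow hp (Nat.one_lt_pow hp.ne_zero ha) (hnd p))
  replace h := (mem_clPow hp (Nat.one_lt_pow (by have := hp.two_le; omega) ha) (hnd _) _).1 h
  obtain ⟨k, -, hk⟩ := h 1
  have hk : a ^ p ≡ (a ^ (p - 1)) ^ k [MOD p] := by rw [pow_one] at hk; exact hk
  rw [← ZMod.natCast_eq_natCast_iff] at hk h1
  have ha0 : (a : ZMod p) ≠ 0 := by rwa [Ne, ZMod.natCast_eq_zero_iff]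
  push_cast at hk h1
  rw [ZMod.pow_card, ZMod.pow_card_sub_one_eq_one ha0, one_pow] at hk
  exact h1 hk.symm

lemma not_clPow_pow_pred_subset {p a : ℕ} (hp : p.Prime) (ha : 1 < a) (hpa : ¬ p ∣ a) :
    ¬ clPow p (a ^ (p - 1)) ⊆ clPow p (a ^ p) := by
  intro hsub
  have hp2 := hp.two_le
  have hnd : ∀ j, ¬ p ∣ a ^ j := fun j h => hpa (hp.dvd_of_dvd_pow h)
  have ha1 : 1 < a ^ (p - 1) := Nat.one_lt_pow (by omega) ha
  have h := hsub (self_mem_clPow hp ha1 (hnd _))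
  replace h := (mem_clPow hp (Nat.one_lt_pow hp.ne_zero ha) (hnd _) _).1 h
  -- modulo `p ^ m` with `m = a ^ (p - 1)`, the power `a ^ (p - 1)` is not yet `1`
  set m := a ^ (p - 1) with hm
  obtain ⟨k, -, hk⟩ := h m
  have hk : a ^ (p - 1) ≡ (a ^ p) ^ k [MOD p ^ m] := hk
  have hlt : m < p ^ m := Nat.lt_pow_self hp.one_lt
  have hcop : Nat.Coprime a (p ^ m) :=
    Nat.Coprime.pow_right _ ((hp.coprime_iff_not_dvd.2 hpa).symm)
  let U := ZMod.unitOfCoprime a hcop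
  have hU : ∀ i j, U ^ i = U ^ j ↔ a ^ i ≡ a ^ j [MOD p ^ m] := by
    intro i j
    rw [← ZMod.natCast_eq_natCast_iff, ← Units.val_inj]
    simp [U]
  have hpo : p ∣ orderOf U := by
    by_contra hpo
    have hdvd : orderOf U ∣ p ^ (m - 1) * (p - 1) := by
      rw [← Nat.totient_prime_pow hp (by omega)]
      exact orderOf_dvd_of_pow_eq_one (ZMod.pow_totient U)
    have hdvd' : orderOf U ∣ p - 1 :=
      (Nat.Coprime.pow_right _ ((hp.coprime_iff_not_dvd.2 hpo).symm)).dvd_of_dvd_mul_left hdvd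
    have h1 : U ^ (p - 1) = U ^ 0 := by rw [pow_zero]; exact orderOf_dvd_iff_pow_eq_one.1 hdvd'
    rw [hU, pow_zero] at h1
    exact absurd (h1.eq_of_lt_of_lt hlt (by omega)) (by omega)
  rw [← pow_mul, ← hU, pow_eq_pow_iff_modEq] at hk
  have hd : p ∣ p - 1 := ((hk.of_dvd hpo).dvd_iff dvd_rfl).2 (dvd_mul_right p k)
  exact absurd (Nat.le_of_dvd (by omega) hd) (by omega)

/-! ### The chain elements -/

lemma golombBasic_of_upChain {p : ℕ} (hp : p.Prime) (hodd : p ≠ 2) {t : Set ℕ+} (ht : t ∈ XX p)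
    (hc : upChain p t) : ∃ n : ℕ, 0 < n ∧ t = golombBasic 1 (p ^ n) := by
  obtain ⟨a, ha0, ha1, hpa, rfl⟩ := ht
  have ha : 1 < a := by omega
  by_cases h1 : 1 ≡ a [MOD p]
  · exact clPow_eq_golombBasic hp hodd ha h1
  have hp2 := hp.two_le
  have hmem : ∀ j, 0 < j → clPow p (a ^ j) ∈ XX p := fun j hj =>
    ⟨a ^ j, by positivity, (Nat.one_lt_pow hj.ne' ha).ne', fun h => hpa (hp.dvd_of_dvd_pow h), rfl⟩
  rcases hc _ (hmem p hp.pos) _ (hmem (p - 1) (by omega)) (clPow_pow_subset hp ha hpa hp.pos)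
    (clPow_pow_subset hp ha hpa (by omega)) with h | h
  · exact absurd h (not_clPow_pow_prime_subset hp ha hpa h1)
  · exact absurd h (not_clPow_pow_pred_subset hp ha hpa)

lemma golombBasic_of_subset {p n : ℕ} (hp : p.Prime) (hodd : p ≠ 2) (hn : 0 < n) {X : Set ℕ+}
    (hX : X ∈ XX p) (hsub : X ⊆ golombBasic 1 (p ^ n)) :
    ∃ m : ℕ, 0 < m ∧ X = golombBasic 1 (p ^ m) := by
  obtain ⟨a, ha0, ha1, hpa, rfl⟩ := hX
  have ha : 1 < a := by omega
  have h := (mem_golombBasic_one _).1 (hsub (self_mem_clPow hp ha hpa))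
  exact clPow_eq_golombBasic hp hodd ha (h.of_dvd (dvd_pow_self _ hn.ne'))

lemma golombBasic_one_total (p m n : ℕ) :
    golombBasic 1 (p ^ m) ⊆ golombBasic 1 (p ^ n) ∨
      golombBasic 1 (p ^ n) ⊆ golombBasic 1 (p ^ m) :=
  (le_total n m).imp golombBasic_one_antitone golombBasic_one_antitone

/-- For an odd prime `p`, the family `{1 + p^nℕ₀ : n ∈ ℕ}` coincides with the set of
`↑`-chain elements of the poset `𝒳_p`, and this set is linearly ordered by inclusion. -/
theorem upChain_elements_XX (p : ℕ) (hp : p.Prime) (hodd : p ≠ 2) :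
    (∀ t ∈ XX p, (upChain p t ↔ ∃ n : ℕ, 0 < n ∧ t = golombBasic 1 (p ^ n))) ∧
    (∀ t ∈ XX p, ∀ s ∈ XX p, upChain p t → upChain p s → t ⊆ s ∨ s ⊆ t) := by
  refine ⟨fun t ht => ⟨golombBasic_of_upChain hp hodd ht, ?_⟩, fun t ht s hs hct hcs => ?_⟩
  · rintro ⟨n, hn, rfl⟩ X hX Y hY hXt hYt
    obtain ⟨i, -, rfl⟩ := golombBasic_of_subset hp hodd hn hX hXt
    obtain ⟨j, -, rfl⟩ := golombBasic_of_subset hp hodd hn hY hYt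
    exact golombBasic_one_total p i j
  · obtain ⟨i, -, rfl⟩ := golombBasic_of_upChain hp hodd ht hct
    obtain ⟨j, -, rfl⟩ := golombBasic_of_upChain hp hodd hs hcs
    exact golombBasic_one_total p i j
end
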